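/- In the square decomposition I² = D₁ ∪ D₂ ∪ K with K linearly ordered (minimum a, maximum b), the order has no gaps from either side: for every z₀ ∈ K \ {b} and ε > 0 there exists z₁ ∈ K with z₀ < z₁ and ρ_K(z₀, z₁) < ε; and for every z₀ ∈ K \ {a} and ε > 0 there exists z₂ ∈ K with z₂ < z₀ and ρ_K(z₂, z₀) < ε. In particular, K has no isolated points except possibly none, and the order is dense-in-itself from both sides at non-extreme points. -/

import Mathlib

/-- The unit square `I² = [0,1] × [0,1]` in the plane. -/
def unitSq : Set (ℝ × ℝ) := Set.Icc (0, 0) (1, 1)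

/-- The open bottom edge `(0,1) × {0}` of the unit square. -/
def botEdge : Set (ℝ × ℝ) := {p | p.1 ∈ Set.Ioo (0 : ℝ) 1 ∧ p.2 = 0}

/-- The open top edge `(0,1) × {1}` of the unit square. -/
def topEdge : Set (ℝ × ℝ) := {p | p.1 ∈ Set.Ioo (0 : ℝ) 1 ∧ p.2 = 1}

/-- The open left edge `{0} × (0,1)` of the unit square. -/
def leftEdge : Set (ℝ × ℝ) := {p | p.1 = 0 ∧ p.2 ∈ Set.Ioo (0 : ℝ) 1}

/-- The open right edge `{1} × (0,1)` of the unit square. -/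
def rightEdge : Set (ℝ × ℝ) := {p | p.1 = 1 ∧ p.2 ∈ Set.Ioo (0 : ℝ) 1}

/-- Accessibility of a boundary point from an open set. -/
def Accessible {X : Type*} [TopologicalSpace X] (U : Set X) (x : X) : Prop :=
  ∃ φ : unitInterval → X, Continuous φ ∧ Function.Injective φ ∧
    (∀ t, φ t ∈ closure U) ∧ (∀ t : unitInterval, (t : ℝ) < 1 → φ t ∈ U) ∧ φ 1 = x

/-- The midpoint parameter `1/2` of the unit interval. -/
noncomputable def half : unitInterval := ⟨1/2, by constructor <;> norm_num⟩

/-- A *crosscut* of the square through `x` (relative to the decomposition pieces `D₁`, `D₂`):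
a continuous injective path from the open bottom edge to the open top edge, passing through
`x` at parameter `1/2`, lying in the open square except for its endpoints, with its first
half in `D₁` and its second half in `D₂`. -/
def IsCrosscut (D₁ D₂ : Set (ℝ × ℝ)) (x : ℝ × ℝ) (φ : unitInterval → ℝ × ℝ) : Prop :=
  Continuous φ ∧ Function.Injective φ ∧ φ 0 ∈ botEdge ∧ φ 1 ∈ topEdge ∧ φ half = x ∧
    (∀ t : unitInterval, 0 < (t : ℝ) → (t : ℝ) < 1 → φ t ∈ interior unitSq) ∧
    (∀ t : unitInterval, (t : ℝ) < 1/2 → φ t ∈ D₁) ∧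
    (∀ t : unitInterval, 1/2 < (t : ℝ) → φ t ∈ D₂)

/-- The standard square decomposition `I² = D₁ ∪ D₂ ∪ K`. -/
structure SqDecomp (D₁ D₂ K : Set (ℝ × ℝ)) (a b : ℝ × ℝ) : Prop where
  cover : unitSq = D₁ ∪ D₂ ∪ K
  disj : Disjoint D₁ D₂
  open₁ : ∃ U, IsOpen U ∧ D₁ = U ∩ unitSq
  open₂ : ∃ U, IsOpen U ∧ D₂ = U ∩ unitSq
  pconn₁ : IsPathConnected D₁
  pconn₂ : IsPathConnected D₂
  front₁ : K = closure D₁ \ D₁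
  front₂ : K = closure D₂ \ D₂
  acc₁ : ∀ x ∈ K, Accessible D₁ x
  acc₂ : ∀ x ∈ K, Accessible D₂ x
  bdry : K ∩ frontier unitSq = {a, b}
  ha : a ∈ leftEdge
  hb : b ∈ rightEdge

/-- The closed disk bounded by a crosscut `φ` and containing the left edge: the closure of
the connected component of `I² \ φ(I)` containing the left edge. -/
def H₁ (φ : unitInterval → ℝ × ℝ) : Set (ℝ × ℝ) :=
  closure (connectedComponentIn (unitSq \ Set.range φ) ((0 : ℝ), (1/2 : ℝ)))

/-- The crosscut-induced order on `K`: `y ≤ x` iff `y = a`, or `x = b`, or `y` lies in the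
closed disk cut off by some crosscut through `x` on the side of the left edge. -/
def kle (D₁ D₂ : Set (ℝ × ℝ)) (a b : ℝ × ℝ) (y x : ℝ × ℝ) : Prop :=
  y = a ∨ x = b ∨ ∃ φ : unitInterval → ℝ × ℝ, IsCrosscut D₁ D₂ x φ ∧ y ∈ H₁ φ

/-!
Janiszewski's theorem (if `A ∩ B` is connected and neither `A` nor `B` separates two points, then
`A ∪ B` does not separate them either) is proved with Eilenberg's criterion: a closed set does not
separate `p` from `q` exactly when `(z - p) / (z - q)` has a continuous logarithm on it. The
boundary of a larger square is added to all separating sets and replaces the point at infinity.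

A cut joins a point `x ≠ a, b` of `K` to the bottom through `D₁` and to the top through `D₂`. It
separates `a` from `b`, and by Janiszewski's theorem the two sides which it determines in `K` depend
on `x` only. This makes `K` a strict linear order with open rays. Moreover `x` is a limit of points
of `K` from either side: otherwise Janiszewski's theorem would provide a connected set that runs
from below the square to above it on one side of the cut, although its retraction to the square
misses `K`. As `K` is compact, the intervals between `x` and its neighbours in the order then become
arbitrarily small. Finally, crosscuts are cuts, and they induce the same order.
-/

open Set Metric Filter Topology

/-! ### Separation by closed sets -/

/-- The set `C` does not separate `p` from `q`: both points lie in the same connected component of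
the complement of `C` (in particular, neither lies in `C`). -/
def Unseparated {X : Type*} [TopologicalSpace X] (C : Set X) (p q : X) : Prop :=
  q ∈ connectedComponentIn Cᶜ p

namespace Unseparated

variable {X : Type*} [TopologicalSpace X] {C C' S : Set X} {p q r : X}

lemma of_isPreconnected (hS : IsPreconnected S) (hSC : Disjoint S C) (hp : p ∈ S) (hq : q ∈ S) :
    Unseparated C p q :=
  hS.subset_connectedComponentIn hp (subset_compl_iff_disjoint_right.2 hSC) hq

lemma refl (hp : p ∉ C) : Unseparated C p p :=
  mem_connectedComponentIn hp

lemma symm (h : Unseparated C p q) : Unseparated C q p := by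
  have hp : p ∈ Cᶜ := connectedComponentIn_nonempty_iff.1 ⟨q, h⟩
  rw [Unseparated, ← connectedComponentIn_eq h]
  exact mem_connectedComponentIn hp

lemma trans (h : Unseparated C p q) (h' : Unseparated C q r) : Unseparated C p r := by
  rwa [Unseparated, connectedComponentIn_eq h]

lemma mono (h : Unseparated C p q) (hC : C' ⊆ C) : Unseparated C' p q :=
  connectedComponentIn_mono p (compl_subset_compl.2 hC) h

lemma right_notMem (h : Unseparated C p q) : q ∉ C :=
  connectedComponentIn_subset _ _ h

lemma left_notMem (h : Unseparated C p q) : p ∉ C :=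
  h.symm.right_notMem

lemma image {Y : Type*} [TopologicalSpace Y] (e : X ≃ₜ Y) (h : Unseparated C p q) :
    Unseparated (e '' C) (e p) (e q) := by
  have hp : p ∈ Cᶜ := h.left_notMem
  rw [Unseparated, ← image_compl_eq e.bijective, ← e.image_connectedComponentIn hp]
  exact mem_image_of_mem e h

lemma image_iff {Y : Type*} [TopologicalSpace Y] (e : X ≃ₜ Y) :
    Unseparated (e '' C) (e p) (e q) ↔ Unseparated C p q := by
  refine ⟨fun h => ?_, image e⟩
  simpa [← image_comp] using h.image e.symm

variable [LocallyConnectedSpace X]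

lemma isOpen_setOf (hC : IsClosed C) : IsOpen {w | Unseparated C p w} :=
  hC.isOpen_compl.connectedComponentIn

lemma of_mem_closure (hC : IsClosed C) (hq : q ∈ closure {w | Unseparated C p w}) (hqC : q ∉ C) :
    Unseparated C p q := by
  obtain ⟨w, hqw, hpw⟩ := mem_closure_iff_nhds.1 hq _
    (connectedComponentIn_mem_nhds (hC.isOpen_compl.mem_nhds hqC))
  exact trans hpw (symm hqw)

lemma or_exists_mem {B : Set X} (hC : IsClosed C) (hB : IsOpen B) (hCB : C ⊆ C' ∪ B)
    (h : Unseparated C' p q) (hp : p ∉ C) :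
    Unseparated C p q ∨ ∃ w ∈ B, Unseparated C p w := by
  by_contra! hcon
  obtain ⟨hpq, hB_sep⟩ := hcon
  refine hpq (isPreconnected_connectedComponentIn.subset_of_closure_inter_subset
    (isOpen_setOf hC (p := p)) ⟨p, mem_connectedComponentIn h.left_notMem, refl hp⟩ ?_ h)
  rintro w ⟨hw, hwC'⟩
  refine of_mem_closure hC hw fun hwC => ?_
  rcases hCB hwC with hwC'' | hwB
  · exact connectedComponentIn_subset _ _ hwC' hwC''
  · obtain ⟨v, hvB, hv⟩ := mem_closure_iff_nhds.1 hw B (hB.mem_nhds hwB)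
    exact hB_sep v hvB hv

end Unseparated

/-! ### Continuous logarithms and Janiszewski's theorem -/

lemma exists_continuous_exp_eq {A : Type*} [TopologicalSpace A] [SimplyConnectedSpace A]
    [LocallyPathConnectedSpace A] {f : A → ℂ} (hf : Continuous f) (hf₀ : ∀ z, f z ≠ 0) :
    ∃ g : A → ℂ, Continuous g ∧ ∀ z, Complex.exp (g z) = f z := by
  obtain ⟨a⟩ : Nonempty A := inferInstance
  obtain ⟨g, ⟨-, hg⟩, -⟩ := Complex.isCoveringMap_exp.existsUnique_continuousMap_lifts
    ⟨fun z => ⟨f z, hf₀ z⟩, by fun_prop⟩ a (Complex.log (f a)) (by simp [Complex.exp_log (hf₀ a)])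
  exact ⟨g, g.continuous, fun z => by simpa using congrArg Subtype.val (congrFun hg z)⟩

lemma sub_eq_sub_of_exp_eq_mul_exp {X : Type*} [TopologicalSpace X] {s : Set X}
    (hs : IsPreconnected s) {g k : X → ℂ} (hg : ContinuousOn g s) (hk : ContinuousOn k s)
    {c : ℂ} (hgk : ∀ z ∈ s, Complex.exp (g z) = c * Complex.exp (k z)) {x y : X} (hx : x ∈ s)
    (hy : y ∈ s) : g x - k x = g y - k y := by
  have exists_int : ∀ z ∈ s,
      ∃ n : ℤ, (g z - k z - (g x - k x)) / (2 * Real.pi * Complex.I) = n := by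
    intro z hz
    have hexp : Complex.exp (g z - k z) = Complex.exp (g x - k x) := by
      simp_rw [Complex.exp_sub, hgk z hz, hgk x hx, mul_div_cancel_right₀ c (Complex.exp_ne_zero _)]
    obtain ⟨n, hn⟩ := Complex.exp_eq_exp_iff_exists_int.1 hexp
    exact ⟨n, by rw [hn, add_sub_cancel_left, mul_div_cancel_right₀ _ Complex.two_pi_I_ne_zero]⟩
  have hdiscrete : IsDiscrete (range ((↑) : ℤ → ℝ)) :=
    ⟨Int.isClosedEmbedding_coe_real.isEmbedding.toHomeomorph.symm.isEmbedding.discreteTopology⟩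
  have hconst := hs.constant_of_mapsTo hdiscrete
    (f := fun z => ((g z - k z - (g x - k x)) / (2 * Real.pi * Complex.I)).re)
    (Complex.continuous_re.comp_continuousOn (((hg.sub hk).sub continuousOn_const).div_const _))
    (fun z hz => (exists_int z hz).imp fun n hn => by simp [hn]) hy hx
  obtain ⟨n, hn⟩ := exists_int y hy
  rw [hn, sub_self, zero_div, Complex.intCast_re, Complex.zero_re, Int.cast_eq_zero] at hconst
  rw [hconst, Int.cast_zero, div_eq_zero_iff, or_iff_left Complex.two_pi_I_ne_zero] at hn
  exact (sub_eq_zero.1 hn).symm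

lemma not_continuous_of_exp_eq_sub {h : ℂ → ℂ} {p : ℂ} {R : ℝ}
    (hh : ∀ z, R ≤ ‖z - p‖ → Complex.exp (h z) = z - p) : ¬ Continuous h := by
  intro hcont
  set r : ℝ := max R 1
  have hr : 0 < r := one_pos.trans_le (le_max_right _ _)
  -- Along the circle of radius `r`, the logarithm `h` has to grow by `2πi`.
  have hlog : ∀ t ∈ (univ : Set ℝ),
      Complex.exp (h (circleMap p r t)) = r * Complex.exp (t * Complex.I) := by
    intro t _
    rw [hh] <;> rw [circleMap_sub_center]
    · rw [circleMap_zero]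
    · rw [norm_circleMap_zero, abs_of_pos hr]
      exact le_max_left R 1
  have hper : circleMap p r (2 * Real.pi) = circleMap p r 0 := by
    simpa using periodic_circleMap p r 0
  have key := sub_eq_sub_of_exp_eq_mul_exp isPreconnected_univ
    (hcont.comp (continuous_circleMap p r)).continuousOn
    (k := fun t : ℝ => t * Complex.I) (by fun_prop) hlog (mem_univ 0) (mem_univ (2 * Real.pi))
  simp only [hper, Function.comp_apply] at key
  apply Complex.two_pi_I_ne_zero
  push_cast at key
  linear_combination key

/-- The function `z ↦ (z - p) / (z - q)` has a continuous logarithm on `C`; the quotient is written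
without division, so that the notion makes sense for every `q`. -/
def HasLogRatio (C : Set ℂ) (p q : ℂ) : Prop :=
  ∃ g : ℂ → ℂ, ContinuousOn g C ∧ ∀ z ∈ C, Complex.exp (g z) * (z - q) = z - p

namespace HasLogRatio

variable {C : Set ℂ} {p q r : ℂ}

lemma symm (h : HasLogRatio C p q) : HasLogRatio C q p := by
  obtain ⟨g, hg, hg_exp⟩ := h
  refine ⟨fun z => -g z, hg.neg, fun w hw => ?_⟩
  rw [← hg_exp w hw, ← mul_assoc, ← Complex.exp_add, neg_add_cancel, Complex.exp_zero, one_mul]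

lemma trans (h : HasLogRatio C p q) (h' : HasLogRatio C q r) : HasLogRatio C p r := by
  obtain ⟨g, hg, hg_exp⟩ := h
  obtain ⟨k, hk, hk_exp⟩ := h'
  refine ⟨fun z => g z + k z, hg.add hk, fun w hw => ?_⟩
  rw [Complex.exp_add, mul_assoc, hk_exp w hw, hg_exp w hw]

lemma eventually_of_notMem (hC : IsClosed C) (hp : p ∉ C) : ∀ᶠ q in 𝓝 p, HasLogRatio C p q := by
  obtain ⟨ε, hε, hball⟩ := Metric.isOpen_iff.1 hC.isOpen_compl p hp
  filter_upwards [Metric.ball_mem_nhds p (half_pos hε)] with q hq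
  rw [mem_ball_iff_norm] at hq
  have hlt : ∀ z ∈ C, ‖q - p‖ < ‖z - q‖ := by
    intro z hz
    have hεz : ε ≤ ‖z - p‖ := not_lt.1 fun hlt => hball (mem_ball_iff_norm.2 hlt) hz
    linarith [norm_sub_le_norm_sub_add_norm_sub z q p]
  have hne : ∀ z ∈ C, z - q ≠ 0 := fun z hz => norm_pos_iff.1 ((norm_nonneg _).trans_lt (hlt z hz))
  have hslit : ∀ z ∈ C, (z - p) / (z - q) ∈ Complex.slitPlane := by
    intro z hz
    rw [show (z - p) / (z - q) = 1 + (q - p) / (z - q) by field_simp [hne z hz]; ring]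
    apply Complex.mem_slitPlane_of_norm_lt_one
    rw [norm_div, div_lt_one (norm_pos_iff.2 (hne z hz))]
    exact hlt z hz
  refine ⟨fun z => Complex.log ((z - p) / (z - q)), ?_, fun z hz => ?_⟩
  · exact ContinuousOn.clog (ContinuousOn.div (by fun_prop) (by fun_prop) hne) hslit
  · rw [Complex.exp_log (Complex.slitPlane_ne_zero (hslit z hz)), div_mul_cancel₀ _ (hne z hz)]

end HasLogRatio

lemma Unseparated.hasLogRatio {C : Set ℂ} {p q : ℂ} (hC : IsClosed C) (h : Unseparated C p q) :
    HasLogRatio C p q :=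
  isPreconnected_connectedComponentIn.induction₂ (HasLogRatio C)
    (fun _ hx => mem_nhdsWithin_of_mem_nhds (HasLogRatio.eventually_of_notMem hC
      (connectedComponentIn_subset _ _ hx)))
    (fun _ _ _ _ _ _ => HasLogRatio.trans) (fun _ _ _ _ => HasLogRatio.symm)
    (mem_connectedComponentIn h.left_notMem) h

-- Eilenberg's criterion. If `p` and `q` were separated, the given logarithm on `C` would let us
-- extend `z - p` from outside the component of `p` to a nowhere vanishing function on the plane;
-- its logarithm would then be a logarithm of `z - p` near infinity.
theorem HasLogRatio.unseparated {C : Set ℂ} (hC : IsClosed C) {p q : ℂ} (hp : p ∉ C)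
    (hbdd : Bornology.IsBounded {w | Unseparated C p w}) (h : HasLogRatio C p q) :
    Unseparated C p q := by
  by_contra hpq
  obtain ⟨g, hg, hg_exp⟩ := h
  obtain ⟨G, hG⟩ := ContinuousMap.exists_restrict_eq hC ⟨C.domRestrict g, hg.domRestrict⟩
  have hGC : ∀ z ∈ C, G z = g z := fun z hz => congrArg (fun f => f ⟨z, hz⟩) hG
  set P : Set ℂ := {w | Unseparated C p w}
  have hpP : p ∈ P := Unseparated.refl hp
  have hfrontier : ∀ z ∈ frontier P, z ∈ C := by
    intro z hz
    by_contra hzC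
    rw [(Unseparated.isOpen_setOf hC).frontier_eq] at hz
    exact hz.2 (Unseparated.of_mem_closure hC hz.1 hzC)
  classical
  let H : ℂ → ℂ := P.piecewise (fun z => Complex.exp (G z) * (z - q)) (fun z => z - p)
  have hH : Continuous H := by
    refine Continuous.piecewise (fun z hz => ?_) (by fun_prop) (by fun_prop)
    rw [hGC z (hfrontier z hz), hg_exp z (hfrontier z hz)]
  have hH₀ : ∀ z, H z ≠ 0 := by
    intro z
    by_cases hz : z ∈ P
    · simp only [H, piecewise_eq_of_mem _ _ _ hz]
      exact mul_ne_zero (Complex.exp_ne_zero _)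
        (sub_ne_zero.2 (ne_of_mem_of_not_mem hz hpq))
    · simp only [H, piecewise_eq_of_notMem _ _ _ hz]
      exact sub_ne_zero.2 (ne_of_mem_of_not_mem hpP hz).symm
  obtain ⟨k, hk, hk_exp⟩ := exists_continuous_exp_eq hH hH₀
  obtain ⟨R, hR⟩ := hbdd.subset_ball p
  refine not_continuous_of_exp_eq_sub (p := p) (R := R) (fun z hz => ?_) hk
  rw [hk_exp]
  exact piecewise_eq_of_notMem _ _ _ fun hzP => (mem_ball_iff_norm.1 (hR hzP)).not_ge hz

lemma HasLogRatio.union {A B : Set ℂ} (hA : IsClosed A) (hB : IsClosed B)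
    (hAB : IsPreconnected (A ∩ B)) {p q : ℂ} (hqA : q ∉ A) (h₁ : HasLogRatio A p q)
    (h₂ : HasLogRatio B p q) : HasLogRatio (A ∪ B) p q := by
  obtain ⟨g, hg, hg_exp⟩ := h₁
  obtain ⟨k, hk, hk_exp⟩ := h₂
  have hexp : ∀ z ∈ A ∩ B, Complex.exp (g z) = 1 * Complex.exp (k z) := fun z hz => by
    rw [one_mul]
    exact mul_right_cancel₀ (sub_ne_zero.2 (ne_of_mem_of_not_mem hz.1 hqA))
      ((hg_exp z hz.1).trans (hk_exp z hz.2).symm)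
  obtain ⟨d, hd_exp, hd⟩ : ∃ d : ℂ, Complex.exp d = 1 ∧ ∀ z ∈ A ∩ B, g z = k z + d := by
    rcases (A ∩ B).eq_empty_or_nonempty with hempty | ⟨w, hw⟩
    · exact ⟨0, by simp, by simp [hempty]⟩
    · refine ⟨g w - k w, ?_, fun z hz => ?_⟩
      · rw [Complex.exp_sub, hexp w hw, one_mul, div_self (Complex.exp_ne_zero _)]
      · rw [← sub_eq_sub_of_exp_eq_mul_exp hAB (hg.mono inter_subset_left)
          (hk.mono inter_subset_right) hexp hz hw]
        ring
  classical
  have hgA : EqOn (A.piecewise g fun z => k z + d) g A := fun z hz => piecewise_eq_of_mem _ _ _ hz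
  have hkB : EqOn (A.piecewise g fun z => k z + d) (fun z => k z + d) B := fun z hz => by
    by_cases hzA : z ∈ A
    · rw [hgA hzA, hd z ⟨hzA, hz⟩]
    · exact piecewise_eq_of_notMem _ _ _ hzA
  refine ⟨A.piecewise g fun z => k z + d, ?_, ?_⟩
  · exact (hg.congr hgA).union_of_isClosed ((hk.add continuousOn_const).congr hkB) hA hB
  · rintro z (hz | hz)
    · rw [hgA hz, hg_exp z hz]
    · rw [hkB hz, Complex.exp_add, hd_exp, mul_one, hk_exp z hz]

/-- **Janiszewski's theorem**, for points of a bounded complementary component. -/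
theorem Unseparated.union {A B : Set ℂ} (hA : IsClosed A) (hB : IsClosed B)
    (hAB : IsPreconnected (A ∩ B)) {p q : ℂ}
    (hbdd : Bornology.IsBounded {w | Unseparated (A ∪ B) p w})
    (h₁ : Unseparated A p q) (h₂ : Unseparated B p q) : Unseparated (A ∪ B) p q :=
  HasLogRatio.unseparated (hA.union hB) (not_or.2 ⟨h₁.left_notMem, h₂.left_notMem⟩) hbdd
    ((h₁.hasLogRatio hA).union hA hB hAB h₁.right_notMem (h₂.hasLogRatio hB))

/- Along `F`, `log (z - p) - log (q - z)` is an admissible logarithm, and along `G` so is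
`log (z - p) - log (z - q)`. Their variations between `e₁` and `e₂` differ by `2πi`, because `q - z`
and `z - q` are related by half turns in opposite directions at the two points. -/
theorem not_hasLogRatio_of_crossing {C F G : Set ℂ} {p q e₁ e₂ : ℂ}
    (hF : IsPreconnected F) (hG : IsPreconnected G) (hFC : F ⊆ C) (hGC : G ⊆ C)
    (heF₁ : e₁ ∈ F) (heF₂ : e₂ ∈ F) (heG₁ : e₁ ∈ G) (heG₂ : e₂ ∈ G)
    (hq₁ : e₁.im < q.im) (hq₂ : q.im < e₂.im)
    (hFp : ∀ z ∈ F, z - p ∈ Complex.slitPlane) (hFq : ∀ z ∈ F, q - z ∈ Complex.slitPlane)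
    (hGp : ∀ z ∈ G, z - p ∈ Complex.slitPlane) (hGq : ∀ z ∈ G, z - q ∈ Complex.slitPlane) :
    ¬ HasLogRatio C p q := by
  rintro ⟨g, hg, hg_exp⟩
  have varF := sub_eq_sub_of_exp_eq_mul_exp hF (c := -1) (hg.mono hFC)
    (k := fun z => Complex.log (z - p) - Complex.log (q - z))
    (ContinuousOn.sub (.clog (by fun_prop) hFp) (.clog (by fun_prop) hFq)) (fun z hz => by
      have hpz := Complex.slitPlane_ne_zero (hFp z hz)
      have hqz := Complex.slitPlane_ne_zero (hFq z hz)
      rw [Complex.exp_sub, Complex.exp_log hpz, Complex.exp_log hqz, ← hg_exp z (hFC hz)]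
      field_simp
      ring) heF₁ heF₂
  have varG := sub_eq_sub_of_exp_eq_mul_exp hG (c := 1) (hg.mono hGC)
    (k := fun z => Complex.log (z - p) - Complex.log (z - q))
    (ContinuousOn.sub (.clog (by fun_prop) hGp) (.clog (by fun_prop) hGq)) (fun z hz => by
      have hpz := Complex.slitPlane_ne_zero (hGp z hz)
      have hqz := Complex.slitPlane_ne_zero (hGq z hz)
      rw [Complex.exp_sub, Complex.exp_log hpz, Complex.exp_log hqz, ← hg_exp z (hGC hz)]
      field_simp) heG₁ heG₂
  have key : Complex.log (-(e₁ - q)) - Complex.log (-(e₂ - q)) =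
      Complex.log (e₁ - q) - Complex.log (e₂ - q) := by
    rw [neg_sub, neg_sub]
    linear_combination varF - varG
  have key_im := congrArg Complex.im key
  simp only [Complex.sub_im, Complex.log_im] at key_im
  rw [Complex.arg_neg_eq_arg_add_pi_of_im_neg (by simpa using hq₁),
    Complex.arg_neg_eq_arg_sub_pi_of_im_pos (by simpa using hq₂)] at key_im
  linarith [Real.pi_pos]

/-! ### Janiszewski's theorem in a framed square -/

lemma equivRealProdCLM_symm_sub_mem_slitPlane {z w : ℝ × ℝ} :
    Complex.equivRealProdCLM.symm z - Complex.equivRealProdCLM.symm w ∈ Complex.slitPlane ↔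
      (z.2 = w.2 → w.1 < z.1) := by
  rw [← map_sub, Complex.mem_slitPlane_iff]
  simp [sub_eq_zero, imp_iff_or_not]

theorem not_unseparated_of_crossing {C F G : Set (ℝ × ℝ)} {p q e₁ e₂ : ℝ × ℝ} (hC : IsClosed C)
    (hF : IsPreconnected F) (hG : IsPreconnected G) (hFC : F ⊆ C) (hGC : G ⊆ C)
    (heF₁ : e₁ ∈ F) (heF₂ : e₂ ∈ F) (heG₁ : e₁ ∈ G) (heG₂ : e₂ ∈ G)
    (hq₁ : e₁.2 < q.2) (hq₂ : q.2 < e₂.2)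
    (hFp : ∀ z ∈ F, z.2 = p.2 → p.1 < z.1) (hFq : ∀ z ∈ F, z.2 = q.2 → z.1 < q.1)
    (hGp : ∀ z ∈ G, z.2 = p.2 → p.1 < z.1) (hGq : ∀ z ∈ G, z.2 = q.2 → q.1 < z.1) :
    ¬ Unseparated C p q := by
  let e : ℝ × ℝ ≃ₜ ℂ := Complex.equivRealProdCLM.symm.toHomeomorph
  rw [← Unseparated.image_iff e]
  intro h
  refine not_hasLogRatio_of_crossing (hF.image e e.continuous.continuousOn)
    (hG.image e e.continuous.continuousOn) (image_mono hFC) (image_mono hGC)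
    (mem_image_of_mem e heF₁) (mem_image_of_mem e heF₂) (mem_image_of_mem e heG₁)
    (mem_image_of_mem e heG₂) (by simpa [e] using hq₁) (by simpa [e] using hq₂)
    ?_ ?_ ?_ ?_ (h.hasLogRatio (e.isClosedMap C hC)) <;> rw [forall_mem_image] <;> intro z hz
  exacts [equivRealProdCLM_symm_sub_mem_slitPlane.2 (hFp z hz),
    equivRealProdCLM_symm_sub_mem_slitPlane.2 fun hzq => hFq z hz hzq.symm,
    equivRealProdCLM_symm_sub_mem_slitPlane.2 (hGp z hz),
    equivRealProdCLM_symm_sub_mem_slitPlane.2 (hGq z hz)]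

/-- An open square that contains the closed unit square. -/
def outerSq : Set (ℝ × ℝ) := Ioo (-1) 2 ×ˢ Ioo (-1) 2

/-- The boundary of `outerSq`; as a part of every barrier, it plays the role of the point at
infinity of the sphere. -/
def outerFrame : Set (ℝ × ℝ) := (Icc (-1) 2 ×ˢ Icc (-1) 2) \ outerSq

lemma outerSq_eq_ball : outerSq = ball ((1 / 2, 1 / 2) : ℝ × ℝ) (3 / 2) := by
  rw [← ball_prod_same, Real.ball_eq_Ioo]
  norm_num [outerSq]

lemma outerFrame_eq_sphere : outerFrame = sphere ((1 / 2, 1 / 2) : ℝ × ℝ) (3 / 2) := by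
  rw [← closedBall_sdiff_ball, ← closedBall_prod_same, Real.closedBall_eq_Icc, ← outerSq_eq_ball]
  norm_num [outerFrame]

lemma outerSq_subset : outerSq ⊆ Icc (-1) 2 ×ˢ Icc (-1) 2 :=
  Set.prod_mono Ioo_subset_Icc_self Ioo_subset_Icc_self

lemma isOpen_outerSq : IsOpen outerSq := isOpen_Ioo.prod isOpen_Ioo

lemma isClosed_outerFrame : IsClosed outerFrame := outerFrame_eq_sphere ▸ isClosed_sphere

lemma isPreconnected_outerFrame : IsPreconnected outerFrame :=
  outerFrame_eq_sphere ▸ isPreconnected_sphere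
    (by rw [← Module.finrank_eq_rank, Module.finrank_prod]; norm_num) _ _

lemma disjoint_outerSq_outerFrame : Disjoint outerSq outerFrame := disjoint_sdiff_right

lemma mk_neg_one_mem_outerFrame {u : ℝ} (hu : u ∈ Icc (-1) 2) : (u, -1) ∈ outerFrame :=
  ⟨⟨hu, by norm_num⟩, fun h => h.2.1.false⟩

lemma mk_two_mem_outerFrame {u : ℝ} (hu : u ∈ Icc (-1) 2) : (u, 2) ∈ outerFrame :=
  ⟨⟨hu, by norm_num⟩, fun h => h.2.2.false⟩

lemma neg_one_mk_mem_outerFrame {v : ℝ} (hv : v ∈ Icc (-1) 2) : (-1, v) ∈ outerFrame :=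
  ⟨⟨by norm_num, hv⟩, fun h => h.1.1.false⟩

lemma two_mk_mem_outerFrame {v : ℝ} (hv : v ∈ Icc (-1) 2) : (2, v) ∈ outerFrame :=
  ⟨⟨by norm_num, hv⟩, fun h => h.1.2.false⟩

lemma Unseparated.mem_outerSq {C : Set (ℝ × ℝ)} {p q : ℝ × ℝ} (h : Unseparated C p q)
    (hC : outerFrame ⊆ C) (hp : p ∈ outerSq) : q ∈ outerSq := by
  refine isPreconnected_connectedComponentIn.subset_of_closure_inter_subset isOpen_outerSq
    ⟨p, mem_connectedComponentIn h.left_notMem, hp⟩ ?_ h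
  rintro z ⟨hz, hzC⟩
  by_contra hzS
  refine connectedComponentIn_subset _ _ hzC (hC ⟨?_, hzS⟩)
  exact closure_minimal outerSq_subset (isClosed_Icc.prod isClosed_Icc) hz

theorem Unseparated.union_of_outerFrame {A B : Set (ℝ × ℝ)} (hA : IsClosed A) (hB : IsClosed B)
    (hAB : IsPreconnected (A ∩ B)) (hframe : outerFrame ⊆ A ∪ B) {p q : ℝ × ℝ} (hp : p ∈ outerSq)
    (h₁ : Unseparated A p q) (h₂ : Unseparated B p q) : Unseparated (A ∪ B) p q := by
  let e : ℝ × ℝ ≃ₜ ℂ := Complex.equivRealProdCLM.symm.toHomeomorph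
  have hbdd : Bornology.IsBounded (e '' outerSq) := by
    have hcompact : IsCompact (e '' (Icc (-1) 2 ×ˢ Icc (-1) 2)) :=
      (isCompact_Icc.prod isCompact_Icc).image e.continuous
    exact hcompact.isBounded.subset (image_mono outerSq_subset)
  rw [← Unseparated.image_iff e, image_union]
  refine Unseparated.union (e.isClosedMap A hA) (e.isClosedMap B hB) ?_ (hbdd.subset ?_)
    (h₁.image e) (h₂.image e)
  · rw [← image_inter e.injective]
    exact hAB.image e e.continuous.continuousOn
  · intro w hw
    obtain ⟨z, rfl⟩ := e.surjective w
    rw [mem_ofPred_eq, ← image_union, Unseparated.image_iff] at hw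
    exact mem_image_of_mem e (hw.mem_outerSq hframe hp)

/-! ### Square decompositions -/

lemma unitSq_eq_prod : unitSq = Icc (0 : ℝ) 1 ×ˢ Icc (0 : ℝ) 1 := Icc_prod_eq _ _

lemma mem_unitSq {z : ℝ × ℝ} : z ∈ unitSq ↔ z.1 ∈ Icc (0 : ℝ) 1 ∧ z.2 ∈ Icc (0 : ℝ) 1 := by
  rw [unitSq_eq_prod, mem_prod]

lemma isClosed_unitSq : IsClosed unitSq := isClosed_Icc

lemma convex_unitSq : Convex ℝ unitSq := convex_Icc _ _

lemma interior_unitSq : interior unitSq = Ioo (0 : ℝ) 1 ×ˢ Ioo (0 : ℝ) 1 := by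
  rw [unitSq_eq_prod, interior_prod_eq, interior_Icc]

lemma unitSq_subset_outerSq : unitSq ⊆ outerSq := by
  rw [unitSq_eq_prod]
  exact Set.prod_mono (Icc_subset_Ioo (by norm_num) (by norm_num))
    (Icc_subset_Ioo (by norm_num) (by norm_num))

namespace SqDecomp

variable {D₁ D₂ K s : Set (ℝ × ℝ)} {a b z : ℝ × ℝ} (h : SqDecomp D₁ D₂ K a b)
include h

lemma symm : SqDecomp D₂ D₁ K a b where
  cover := by rw [h.cover, union_comm D₁ D₂]
  disj := h.disj.symm
  open₁ := h.open₂
  open₂ := h.open₁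
  pconn₁ := h.pconn₂
  pconn₂ := h.pconn₁
  front₁ := h.front₂
  front₂ := h.front₁
  acc₁ := h.acc₂
  acc₂ := h.acc₁
  bdry := h.bdry
  ha := h.ha
  hb := h.hb

lemma subset_unitSq : D₁ ⊆ unitSq := h.cover ▸ fun _ hz => Or.inl (Or.inl hz)

lemma K_subset_unitSq : K ⊆ unitSq := h.cover ▸ subset_union_right

lemma K_subset_closure : K ⊆ closure D₁ := h.front₁ ▸ sdiff_subset

lemma disjoint_K : Disjoint D₁ K := h.front₁ ▸ disjoint_sdiff_right

lemma isPreconnected : IsPreconnected D₁ := h.pconn₁.isConnected.isPreconnected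

lemma isPreconnected_union (hs : s ⊆ K) : IsPreconnected (D₁ ∪ s) :=
  h.isPreconnected.subset_closure subset_union_left
    (union_subset subset_closure (hs.trans h.K_subset_closure))

lemma isClosed_K : IsClosed K := by
  obtain ⟨U, hU, hDU⟩ := h.open₁
  have hK : K = closure D₁ ∩ Uᶜ := by
    ext z
    rw [h.front₁]
    refine and_congr_right fun hz => not_congr ?_
    rw [hDU]
    exact and_iff_left (closure_minimal h.subset_unitSq isClosed_unitSq hz)
  rw [hK]
  exact isClosed_closure.inter hU.isClosed_compl

lemma a_mem : a ∈ K := (h.bdry.superset (mem_insert a {b})).1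

lemma b_mem : b ∈ K := (h.bdry.superset (mem_insert_of_mem a rfl)).1

lemma ne : a ≠ b := fun hab => by
  have hfst := congrArg Prod.fst hab
  rw [h.ha.1, h.hb.1] at hfst
  exact zero_ne_one hfst

lemma eq_or_eq_or_mem_interior (hz : z ∈ K) : z = a ∨ z = b ∨ z ∈ interior unitSq := by
  by_contra! hne
  have hfr : z ∈ K ∩ frontier unitSq := ⟨hz, subset_closure (h.K_subset_unitSq hz), hne.2.2⟩
  rw [h.bdry] at hfr
  exact hfr.elim hne.1 hne.2.1

end SqDecomp

/-! ### Cuts and their barriers -/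

/-- A continuum that joins `s` to `x` and lies in `D` except for its endpoint `x`. -/
structure IsArm {X : Type*} [TopologicalSpace X] (D : Set X) (s x : X) (A : Set X) : Prop where
  isClosed : IsClosed A
  isPreconnected : IsPreconnected A
  source_mem : s ∈ A
  target_mem : x ∈ A
  subset : A ⊆ D ∪ {x}

/-- One half of a barrier at `x`: a closed connected set that joins `x` to `outerFrame` through `D`
and through a region `Z` outside the unit square. -/
structure IsHalfBarrier (D Z : Set (ℝ × ℝ)) (x : ℝ × ℝ) (P : Set (ℝ × ℝ)) : Prop where
  isClosed : IsClosed P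
  isPreconnected : IsPreconnected P
  frame_subset : outerFrame ⊆ P
  mem : x ∈ P
  subset : P ⊆ D ∪ {x} ∪ Z ∪ outerFrame

/-- The vertical strip below the unit square. -/
def bottomStrip : Set (ℝ × ℝ) := Ioo 0 1 ×ˢ Iio 0

/-- The vertical strip above the unit square. -/
def topStrip : Set (ℝ × ℝ) := Ioo 0 1 ×ˢ Ioi 1

lemma disjoint_unitSq_bottomStrip : Disjoint unitSq bottomStrip :=
  Set.disjoint_left.2 fun _ hz hz' => (mem_unitSq.1 hz).2.1.not_gt hz'.2

lemma disjoint_unitSq_topStrip : Disjoint unitSq topStrip :=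
  Set.disjoint_left.2 fun _ hz hz' => (mem_unitSq.1 hz).2.2.not_gt hz'.2

lemma disjoint_bottomStrip_topStrip : Disjoint bottomStrip topStrip :=
  disjoint_prod.2 (Or.inr (Iio_disjoint_Ioi_of_le zero_le_one))

lemma IsArm.isHalfBarrier {D Z T A : Set (ℝ × ℝ)} {s t x : ℝ × ℝ} (hA : IsArm D s x A)
    (hT : IsClosed T) (hT' : IsPreconnected T) (hsT : s ∈ T) (htT : t ∈ T) (ht : t ∈ outerFrame)
    (hTZ : T ⊆ insert s Z) : IsHalfBarrier D Z x (outerFrame ∪ (T ∪ A)) where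
  isClosed := isClosed_outerFrame.union (hT.union hA.isClosed)
  isPreconnected := isPreconnected_outerFrame.union t ht (Or.inl htT)
    (hT'.union s hsT hA.source_mem hA.isPreconnected)
  frame_subset := subset_union_left
  mem := Or.inr (Or.inr hA.target_mem)
  subset := by
    rintro z (hz | hz | hz)
    · exact Or.inr hz
    · rcases hTZ hz with rfl | hz
      exacts [Or.inl (Or.inl (hA.subset hA.source_mem)), Or.inl (Or.inr hz)]
    · exact Or.inl (Or.inl (hA.subset hz))

lemma IsArm.subset_unitSq {D₁ D₂ K A : Set (ℝ × ℝ)} {a b s x : ℝ × ℝ} (h : SqDecomp D₁ D₂ K a b)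
    (hA : IsArm D₁ s x A) (hx : x ∈ K) : A ⊆ unitSq :=
  hA.subset.trans
    (union_subset h.subset_unitSq (singleton_subset_iff.2 (h.K_subset_unitSq hx)))

namespace IsHalfBarrier

variable {D D₁ D₂ K Z : Set (ℝ × ℝ)} {a b x y z : ℝ × ℝ} {P P' P₁ P₂ P₁' P₂' : Set (ℝ × ℝ)}

lemma union (hP : IsHalfBarrier D Z x P) (hP' : IsHalfBarrier D Z x P') :
    IsHalfBarrier D Z x (P ∪ P') where
  isClosed := hP.isClosed.union hP'.isClosed
  isPreconnected := hP.isPreconnected.union x hP.mem hP'.mem hP'.isPreconnected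
  frame_subset := hP.frame_subset.trans subset_union_left
  mem := Or.inl hP.mem
  subset := union_subset hP.subset hP'.subset

lemma eq_of_mem (h : SqDecomp D₁ D₂ K a b) (hZ : Disjoint unitSq Z) (hP : IsHalfBarrier D₁ Z x P)
    (hy : y ∈ K) (hyP : y ∈ P) : y = x := by
  rcases hP.subset hyP with ((hyD | hyx) | hyZ) | hyF
  · exact (disjoint_right.1 h.disjoint_K hy hyD).elim
  · exact hyx
  · exact (disjoint_left.1 hZ (h.K_subset_unitSq hy) hyZ).elim
  · exact (disjoint_left.1 disjoint_outerSq_outerFrame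
      (unitSq_subset_outerSq (h.K_subset_unitSq hy)) hyF).elim

lemma unseparated (h : SqDecomp D₁ D₂ K a b) (hZ : Disjoint unitSq Z)
    (hP : IsHalfBarrier D₁ Z x P) (hx : x ∈ K) (hy : y ∈ K) (hz : z ∈ K) (hyx : y ≠ x)
    (hzx : z ≠ x) : Unseparated P y z := by
  have hyz : ({y, z} : Set (ℝ × ℝ)) ⊆ K := by rintro w (rfl | rfl) <;> assumption
  refine Unseparated.of_isPreconnected (h.symm.isPreconnected_union hyz) ?_ (by simp) (by simp)
  rw [disjoint_union_left]
  refine ⟨disjoint_left.2 fun w hw hwP => ?_, disjoint_left.2 fun w hw hwP => ?_⟩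
  · rcases hP.subset hwP with ((hwD | rfl) | hwZ) | hwF
    · exact disjoint_left.1 h.disj hwD hw
    · exact disjoint_left.1 h.symm.disjoint_K hw hx
    · exact disjoint_left.1 hZ (h.symm.subset_unitSq hw) hwZ
    · exact disjoint_left.1 disjoint_outerSq_outerFrame
        (unitSq_subset_outerSq (h.symm.subset_unitSq hw)) hwF
  · obtain rfl := hP.eq_of_mem h hZ (hyz hw) hwP
    rcases hw with rfl | rfl
    exacts [hyx rfl, hzx rfl]

lemma inter_subset (h : SqDecomp D₁ D₂ K a b) (h₁ : IsHalfBarrier D₁ bottomStrip x P₁)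
    (h₂ : IsHalfBarrier D₂ topStrip x P₂) : P₁ ∩ P₂ ⊆ outerFrame ∪ {x} := by
  have hDZ₁ := disjoint_unitSq_bottomStrip.mono_left h.symm.subset_unitSq
  have hDZ₂ := disjoint_unitSq_topStrip.mono_left h.subset_unitSq
  rintro z ⟨hz₁, hz₂⟩
  rcases h₁.subset hz₁ with ((hz₁ | hz₁) | hz₁) | hz₁
  · rcases h₂.subset hz₂ with ((hz₂ | hz₂) | hz₂) | hz₂
    exacts [(disjoint_left.1 h.disj hz₁ hz₂).elim, Or.inr hz₂,
      (disjoint_left.1 hDZ₂ hz₁ hz₂).elim, Or.inl hz₂]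
  · exact Or.inr hz₁
  · rcases h₂.subset hz₂ with ((hz₂ | hz₂) | hz₂) | hz₂
    exacts [(disjoint_left.1 hDZ₁ hz₂ hz₁).elim, Or.inr hz₂,
      (disjoint_left.1 disjoint_bottomStrip_topStrip hz₁ hz₂).elim, Or.inl hz₂]
  · exact Or.inl hz₁

-- Janiszewski's theorem for `P ∪ P'` and `P ∪ Q`, whose intersection is `P`.
lemma replace {Q : Set (ℝ × ℝ)} (hP : IsHalfBarrier D Z x P) (hP' : IsClosed P') (hQ : IsClosed Q)
    (hP'Q : P' ∩ Q ⊆ outerFrame ∪ {x}) (hy : y ∈ outerSq) (hPP' : Unseparated (P ∪ P') y z)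
    (hPQ : Unseparated (P ∪ Q) y z) : Unseparated (P' ∪ Q) y z := by
  refine Unseparated.mono (Unseparated.union_of_outerFrame (hP.isClosed.union hP')
    (hP.isClosed.union hQ) ?_ (fun w hw => Or.inl (Or.inl (hP.frame_subset hw))) hy hPP' hPQ)
    (union_subset_union subset_union_right subset_union_right)
  rw [← union_inter_distrib_left, union_eq_left.2
    (hP'Q.trans (union_subset hP.frame_subset (singleton_subset_iff.2 hP.mem)))]
  exact hP.isPreconnected

theorem unseparated_union_of_unseparated_union (h : SqDecomp D₁ D₂ K a b)
    (h₁ : IsHalfBarrier D₁ bottomStrip x P₁) (h₂ : IsHalfBarrier D₂ topStrip x P₂)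
    (h₁' : IsHalfBarrier D₁ bottomStrip x P₁') (h₂' : IsHalfBarrier D₂ topStrip x P₂')
    (hx : x ∈ K) (hy : y ∈ K) (hz : z ∈ K) (hu : Unseparated (P₁ ∪ P₂) y z) :
    Unseparated (P₁' ∪ P₂') y z := by
  have hyx : y ≠ x := fun hyx => hu.left_notMem (Or.inl (hyx ▸ h₁.mem))
  have hzx : z ≠ x := fun hzx => hu.right_notMem (Or.inl (hzx ▸ h₁.mem))
  have hyS := unitSq_subset_outerSq (h.K_subset_unitSq hy)
  have hu' : Unseparated (P₁' ∪ P₂) y z :=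
    h₁.replace h₁'.isClosed h₂.isClosed (h₁'.inter_subset h h₂) hyS
      ((h₁.union h₁').unseparated h disjoint_unitSq_bottomStrip hx hy hz hyx hzx) hu
  rw [union_comm] at hu' ⊢
  refine h₂.replace h₂'.isClosed h₁'.isClosed ?_ hyS
    ((h₂.union h₂').unseparated h.symm disjoint_unitSq_topStrip hx hy hz hyx hzx) hu'
  rw [inter_comm]
  exact h₁'.inter_subset h h₂'

-- Off `B`, the two halves meet only in the frame, so Janiszewski's theorem applies.
lemma unseparated_sdiff_union_sdiff {B : Set (ℝ × ℝ)} (h : SqDecomp D₁ D₂ K a b)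
    (h₁ : IsHalfBarrier D₁ bottomStrip x P₁) (h₂ : IsHalfBarrier D₂ topStrip x P₂)
    (hB : IsOpen B) (hxB : x ∈ B) (hB' : B ⊆ outerSq) (hx : x ∈ K) (hy : y ∈ K) (hz : z ∈ K)
    (hyx : y ≠ x) (hzx : z ≠ x) : Unseparated (P₁ \ B ∪ P₂ \ B) y z := by
  have hBF : Disjoint outerFrame B := (disjoint_outerSq_outerFrame.mono_left hB').symm
  have hF₁ : outerFrame ⊆ P₁ \ B := subset_sdiff.2 ⟨h₁.frame_subset, hBF⟩
  have hF₂ : outerFrame ⊆ P₂ \ B := subset_sdiff.2 ⟨h₂.frame_subset, hBF⟩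
  have hinter : P₁ \ B ∩ (P₂ \ B) = outerFrame := by
    refine Subset.antisymm ?_ (subset_inter hF₁ hF₂)
    rintro w ⟨⟨hw₁, hwB⟩, hw₂, -⟩
    refine (h₁.inter_subset h h₂ ⟨hw₁, hw₂⟩).resolve_right fun hwx => hwB ?_
    rwa [mem_singleton_iff.1 hwx]
  exact Unseparated.union_of_outerFrame (h₁.isClosed.sdiff hB) (h₂.isClosed.sdiff hB)
    (hinter ▸ isPreconnected_outerFrame) (hF₁.trans subset_union_left)
    (unitSq_subset_outerSq (h.K_subset_unitSq hy))
    ((h₁.unseparated h disjoint_unitSq_bottomStrip hx hy hz hyx hzx).mono sdiff_subset)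
    ((h₂.unseparated h.symm disjoint_unitSq_topStrip hx hy hz hyx hzx).mono sdiff_subset)

end IsHalfBarrier

/-- The data of a barrier through `x` that separates the left from the right side of the square:
arms in `D₁` and `D₂` that join `x` to a point of the bottom and of the top side. -/
structure Cut (D₁ D₂ : Set (ℝ × ℝ)) (x : ℝ × ℝ) where
  c₁ : ℝ
  c₂ : ℝ
  c₁_mem : c₁ ∈ Ioo (0 : ℝ) 1
  c₂_mem : c₂ ∈ Ioo (0 : ℝ) 1
  A₁ : Set (ℝ × ℝ)
  A₂ : Set (ℝ × ℝ)
  isArm₁ : IsArm D₁ (c₁, 0) x A₁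
  isArm₂ : IsArm D₂ (c₂, 1) x A₂

namespace Cut

variable {D₁ D₂ K : Set (ℝ × ℝ)} {a b x y z : ℝ × ℝ}

/-- The frame together with the lower arm of a cut and a vertical tail that joins them. -/
def bottom (E : Cut D₁ D₂ x) : Set (ℝ × ℝ) := outerFrame ∪ ({E.c₁} ×ˢ Icc (-1) 0 ∪ E.A₁)

/-- The frame together with the upper arm of a cut and a vertical tail that joins them. -/
def top (E : Cut D₁ D₂ x) : Set (ℝ × ℝ) := outerFrame ∪ ({E.c₂} ×ˢ Icc 1 2 ∪ E.A₂)

/-- The closed connected set by which a cut separates the plane. -/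
def barrier (E : Cut D₁ D₂ x) : Set (ℝ × ℝ) := E.bottom ∪ E.top

lemma isHalfBarrier_bottom (E : Cut D₁ D₂ x) : IsHalfBarrier D₁ bottomStrip x E.bottom := by
  have hc := E.c₁_mem
  refine E.isArm₁.isHalfBarrier (t := (E.c₁, -1)) (isClosed_singleton.prod isClosed_Icc)
    (isPreconnected_singleton.prod isPreconnected_Icc) ⟨rfl, by norm_num⟩ ⟨rfl, by norm_num⟩
    (mk_neg_one_mem_outerFrame ⟨by linarith [hc.1], by linarith [hc.2]⟩) ?_
  rintro ⟨u, v⟩ ⟨rfl, -, hv⟩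
  exact hv.eq_or_lt.imp (fun hv => Prod.ext rfl hv) fun hv => ⟨hc, hv⟩

lemma isHalfBarrier_top (E : Cut D₁ D₂ x) : IsHalfBarrier D₂ topStrip x E.top := by
  have hc := E.c₂_mem
  refine E.isArm₂.isHalfBarrier (t := (E.c₂, 2)) (isClosed_singleton.prod isClosed_Icc)
    (isPreconnected_singleton.prod isPreconnected_Icc) ⟨rfl, by norm_num⟩ ⟨rfl, by norm_num⟩
    (mk_two_mem_outerFrame ⟨by linarith [hc.1], by linarith [hc.2]⟩) ?_
  rintro ⟨u, v⟩ ⟨rfl, hv, -⟩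
  exact hv.eq_or_lt.imp (fun hv => Prod.ext rfl hv.symm) fun hv => ⟨hc, hv⟩

lemma isClosed_barrier (E : Cut D₁ D₂ x) : IsClosed E.barrier :=
  E.isHalfBarrier_bottom.isClosed.union E.isHalfBarrier_top.isClosed

lemma mem_barrier (E : Cut D₁ D₂ x) : x ∈ E.barrier := Or.inl E.isHalfBarrier_bottom.mem

lemma frame_subset_barrier (E : Cut D₁ D₂ x) : outerFrame ⊆ E.barrier :=
  E.isHalfBarrier_bottom.frame_subset.trans subset_union_left

lemma barrier_subset (E : Cut D₁ D₂ x) :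
    E.barrier ⊆ D₁ ∪ D₂ ∪ {x} ∪ Prod.fst ⁻¹' Ioo 0 1 ∪ outerFrame := by
  rintro z (hz | hz)
  · rcases E.isHalfBarrier_bottom.subset hz with ((hz | hz) | hz) | hz
    exacts [Or.inl (Or.inl (Or.inl (Or.inl hz))), Or.inl (Or.inl (Or.inr hz)),
      Or.inl (Or.inr hz.1), Or.inr hz]
  · rcases E.isHalfBarrier_top.subset hz with ((hz | hz) | hz) | hz
    exacts [Or.inl (Or.inl (Or.inl (Or.inr hz))), Or.inl (Or.inl (Or.inr hz)),
      Or.inl (Or.inr hz.1), Or.inr hz]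

lemma disjoint_barrier (h : SqDecomp D₁ D₂ K a b) (E : Cut D₁ D₂ x) {S : Set (ℝ × ℝ)}
    (hS : S ⊆ outerSq) (hS₁ : ∀ z ∈ S, z.1 ∉ Ioo 0 1) (hSK : S ∩ unitSq ⊆ K) (hxS : x ∉ S) :
    Disjoint S E.barrier := by
  refine disjoint_left.2 fun z hz hzE => ?_
  rcases E.barrier_subset hzE with (((hzD | hzD) | rfl) | hz₁) | hzF
  · exact disjoint_left.1 h.disjoint_K hzD (hSK ⟨hz, h.subset_unitSq hzD⟩)
  · exact disjoint_left.1 h.symm.disjoint_K hzD (hSK ⟨hz, h.symm.subset_unitSq hzD⟩)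
  · exact hxS hz
  · exact hS₁ z hz hz₁
  · exact disjoint_left.1 disjoint_outerSq_outerFrame (hS hz) hzF

lemma eq_of_mem_barrier (h : SqDecomp D₁ D₂ K a b) (E : Cut D₁ D₂ x) (hz : z ∈ K)
    (hzE : z ∈ E.barrier) : z = x :=
  hzE.elim (E.isHalfBarrier_bottom.eq_of_mem h disjoint_unitSq_bottomStrip hz)
    (E.isHalfBarrier_top.eq_of_mem h.symm disjoint_unitSq_topStrip hz)

theorem unseparated_barrier_iff (h : SqDecomp D₁ D₂ K a b) (E E' : Cut D₁ D₂ x) (hx : x ∈ K)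
    (hy : y ∈ K) (hz : z ∈ K) : Unseparated E.barrier y z ↔ Unseparated E'.barrier y z :=
  ⟨E.isHalfBarrier_bottom.unseparated_union_of_unseparated_union h E.isHalfBarrier_top
    E'.isHalfBarrier_bottom E'.isHalfBarrier_top hx hy hz,
  E'.isHalfBarrier_bottom.unseparated_union_of_unseparated_union h E'.isHalfBarrier_top
    E.isHalfBarrier_bottom E.isHalfBarrier_top hx hy hz⟩

theorem mem_closure_setOf_unseparated (h : SqDecomp D₁ D₂ K a b) (E : Cut D₁ D₂ x) (hx : x ∈ K)
    (hy : y ∈ K) (hz : z ∈ K) (hyx : y ≠ x) (hzx : z ≠ x) (hyz : ¬ Unseparated E.barrier y z) :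
    x ∈ closure {w | Unseparated E.barrier y w} := by
  rw [_root_.mem_closure_iff]
  intro U hU hxU
  have hB : IsOpen (U ∩ outerSq) := hU.inter isOpen_outerSq
  have hu := E.isHalfBarrier_bottom.unseparated_sdiff_union_sdiff h E.isHalfBarrier_top hB
    ⟨hxU, unitSq_subset_outerSq (h.K_subset_unitSq hx)⟩ inter_subset_right hx hy hz hyx hzx
  have hcover : E.barrier ⊆ (E.bottom \ (U ∩ outerSq) ∪ E.top \ (U ∩ outerSq)) ∪ U ∩ outerSq := by
    rw [← union_sdiff_distrib]
    exact subset_sdiff_union _ _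
  obtain hu' | ⟨w, hw, hyw⟩ := hu.or_exists_mem E.isClosed_barrier hB hcover
    fun hyE => hyx (E.eq_of_mem_barrier h hy hyE)
  exacts [absurd hu' hyz, ⟨w, hw.1, hyw⟩]

end Cut

/-- The part of `outerSq` to the left of the unit square. -/
def leftBox : Set (ℝ × ℝ) := Ioo (-1) 0 ×ˢ Ioo (-1) 2

/-- The part of `outerSq` to the right of the unit square. -/
def rightBox : Set (ℝ × ℝ) := Ioo 1 2 ×ˢ Ioo (-1) 2

namespace SqDecomp

variable {D₁ D₂ K : Set (ℝ × ℝ)} {a b : ℝ × ℝ} (h : SqDecomp D₁ D₂ K a b)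
include h

lemma a_mem_closure_leftBox : a ∈ closure leftBox := by
  rw [leftBox, closure_prod_eq, closure_Ioo (by norm_num), closure_Ioo (by norm_num)]
  exact ⟨⟨by linarith [h.ha.1], h.ha.1.le⟩, by linarith [h.ha.2.1], by linarith [h.ha.2.2]⟩

lemma b_mem_closure_rightBox : b ∈ closure rightBox := by
  rw [rightBox, closure_prod_eq, closure_Ioo (by norm_num), closure_Ioo (by norm_num)]
  exact ⟨⟨h.hb.1.ge, by linarith [h.hb.1]⟩, by linarith [h.hb.2.1], by linarith [h.hb.2.2]⟩

end SqDecomp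

namespace Cut

variable {D₁ D₂ K : Set (ℝ × ℝ)} {a b e x y z : ℝ × ℝ}

lemma unseparated_of_mem_box {S : Set (ℝ × ℝ)} (h : SqDecomp D₁ D₂ K a b) (E : Cut D₁ D₂ x)
    (hx : x ∈ K) (he : e ∈ K) (hxe : x ≠ e) (he₁ : e.1 ∉ Ioo 0 1) (hS : IsPreconnected S)
    (hS' : S ⊆ outerSq) (hS₁ : ∀ w ∈ S, w.1 ∉ Icc 0 1) (heS : e ∈ closure S) (hz : z ∈ S) :
    Unseparated E.barrier z e := by
  have hSI : Disjoint S unitSq := disjoint_left.2 fun w hw hwI => hS₁ w hw (mem_unitSq.1 hwI).1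
  refine Unseparated.of_isPreconnected
    (hS.subset_closure (subset_insert _ _) (insert_subset heS subset_closure))
    (E.disjoint_barrier h
      (insert_subset (unitSq_subset_outerSq (h.K_subset_unitSq he)) hS') ?_ ?_ ?_)
    (mem_insert_of_mem e hz) (mem_insert e S)
  · rintro w (rfl | hw)
    exacts [he₁, fun hw₁ => hS₁ w hw (Ioo_subset_Icc_self hw₁)]
  · rintro w ⟨rfl | hw, hwI⟩
    exacts [he, (disjoint_left.1 hSI hw hwI).elim]
  · exact fun hx' => hx'.elim hxe fun hxS => disjoint_left.1 hSI hxS (h.K_subset_unitSq hx)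

lemma unseparated_of_mem_leftBox (h : SqDecomp D₁ D₂ K a b) (E : Cut D₁ D₂ x) (hx : x ∈ K)
    (hxa : x ≠ a) (hz : z ∈ leftBox) : Unseparated E.barrier z a :=
  E.unseparated_of_mem_box h hx h.a_mem hxa (fun ha => ha.1.ne' h.ha.1)
    (isPreconnected_Ioo.prod isPreconnected_Ioo)
    (Set.prod_mono (Ioo_subset_Ioo_right (by norm_num)) subset_rfl)
    (fun _ hw hw₁ => hw₁.1.not_gt hw.1.2) h.a_mem_closure_leftBox hz

lemma unseparated_of_mem_rightBox (h : SqDecomp D₁ D₂ K a b) (E : Cut D₁ D₂ x) (hx : x ∈ K)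
    (hxb : x ≠ b) (hz : z ∈ rightBox) : Unseparated E.barrier z b :=
  E.unseparated_of_mem_box h hx h.b_mem hxb (fun hb => hb.2.ne h.hb.1)
    (isPreconnected_Ioo.prod isPreconnected_Ioo)
    (Set.prod_mono (Ioo_subset_Ioo_left (by norm_num)) subset_rfl)
    (fun _ hw hw₁ => hw₁.2.not_gt hw.1.1) h.b_mem_closure_rightBox hz

lemma disjoint_barrier_below (h : SqDecomp D₁ D₂ K a b) (E : Cut D₁ D₂ x) (hx : x ∈ K) {s : Set ℝ}
    (hs : s ⊆ Ioo (-1) 2) (hcs : E.c₁ ∉ s) : Disjoint (s ×ˢ Ioo (-1) 0) E.barrier := by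
  have hI : ∀ w ∈ s ×ˢ Ioo (-1) 0, w ∉ unitSq := fun w hw hwI =>
    hw.2.2.not_ge (mem_unitSq.1 hwI).2.1
  refine disjoint_left.2 fun w hw hwE => ?_
  have hwF : w ∉ outerFrame := disjoint_left.1 disjoint_outerSq_outerFrame
    ⟨hs hw.1, hw.2.1, hw.2.2.trans (by norm_num)⟩
  rcases hwE with (hwE | hwT | hwA) | hwE
  · exact hwF hwE
  · exact hcs (hwT.1 ▸ hw.1)
  · exact hI w hw (E.isArm₁.subset_unitSq h hx hwA)
  · rcases E.isHalfBarrier_top.subset hwE with ((hwD | rfl) | hwZ) | hwF'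
    exacts [hI w hw (h.symm.subset_unitSq hwD), hI _ hw (h.K_subset_unitSq hx),
      lt_asymm (hw.2.2.trans zero_lt_one) hwZ.2, hwF hwF']

lemma unseparated_or_unseparated_of_below (h : SqDecomp D₁ D₂ K a b) (E : Cut D₁ D₂ x)
    (hx : x ∈ K) (hxa : x ≠ a) (hxb : x ≠ b) (hz : z ∈ Ioo (-1) 2 ×ˢ Ioo (-1) 0)
    (hzE : z ∉ E.barrier) :
    Unseparated E.barrier z a ∨ Unseparated E.barrier z b := by
  have hc := E.c₁_mem
  have hz₂ : z.2 ∈ Ioo (-1) 2 := Ioo_subset_Ioo_right (by norm_num) hz.2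
  have hbox : ∀ s ⊆ Ioo (-1 : ℝ) 2, IsPreconnected s → E.c₁ ∉ s → ∀ u ∈ s, z.1 ∈ s →
      Unseparated E.barrier z (u, z.2) := fun s hs hs' hcs u hu hzs =>
    Unseparated.of_isPreconnected (hs'.prod isPreconnected_Ioo)
      (E.disjoint_barrier_below h hx hs hcs) ⟨hzs, hz.2⟩ ⟨hu, hz.2⟩
  rcases lt_trichotomy z.1 E.c₁ with hlt | heq | hgt
  · refine Or.inl ((hbox (Ioo (-1) E.c₁) (Ioo_subset_Ioo_right (by linarith [hc.2]))
      isPreconnected_Ioo (fun hc => hc.2.false) (-1 / 2) ⟨by norm_num, by linarith [hc.1]⟩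
      ⟨hz.1.1, hlt⟩).trans (E.unseparated_of_mem_leftBox h hx hxa ⟨by norm_num, hz₂⟩))
  · exact absurd (Or.inl (Or.inr (Or.inl ⟨heq, Ioo_subset_Icc_self hz.2⟩))) hzE
  · refine Or.inr ((hbox (Ioo E.c₁ 2) (Ioo_subset_Ioo_left (by linarith [hc.1]))
      isPreconnected_Ioo (fun hc => hc.1.false) (3 / 2) ⟨by linarith [hc.2], by norm_num⟩
      ⟨hgt, hz.1.2⟩).trans (E.unseparated_of_mem_rightBox h hx hxb ⟨by norm_num, hz₂⟩))

/- Except for the lower tail, the barrier is `A₁ ∪ E.top`, which separates no two points of `K`; so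
a connected set from `y` to `a` meets the barrier first, if at all, next to this tail. -/
theorem unseparated_or_unseparated (h : SqDecomp D₁ D₂ K a b) (E : Cut D₁ D₂ x) (hx : x ∈ K)
    (hxa : x ≠ a) (hxb : x ≠ b) (hy : y ∈ K) (hyx : y ≠ x) :
    Unseparated E.barrier y a ∨ Unseparated E.barrier y b := by
  have hinter : E.A₁ ∩ E.top ⊆ {x} := by
    rintro w ⟨hwA, hwP⟩
    refine (E.isHalfBarrier_bottom.inter_subset h E.isHalfBarrier_top
      ⟨Or.inr (Or.inr hwA), hwP⟩).resolve_left ?_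
    exact disjoint_left.1 disjoint_outerSq_outerFrame
      (unitSq_subset_outerSq (E.isArm₁.subset_unitSq h hx hwA))
  have hu : Unseparated (E.A₁ ∪ E.top) y a :=
    Unseparated.union_of_outerFrame E.isArm₁.isClosed E.isHalfBarrier_top.isClosed
      (Set.subsingleton_of_subset_singleton hinter).isPreconnected
      (E.isHalfBarrier_top.frame_subset.trans subset_union_right)
      (unitSq_subset_outerSq (h.K_subset_unitSq hy))
      ((E.isHalfBarrier_bottom.unseparated h disjoint_unitSq_bottomStrip hx hy h.a_mem hyx
        hxa.symm).mono (subset_union_right.trans subset_union_right))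
      (E.isHalfBarrier_top.unseparated h.symm disjoint_unitSq_topStrip hx hy h.a_mem hyx hxa.symm)
  have hc : E.c₁ ∈ Ioo (-1) 2 := Ioo_subset_Ioo (by norm_num) (by norm_num) E.c₁_mem
  have hcover : E.barrier ⊆ (E.A₁ ∪ E.top) ∪ Ioo (-1) 2 ×ˢ Ioo (-1) 0 := by
    rintro ⟨u, v⟩ ((hw | ⟨rfl, hv₁, hv₂⟩ | hw) | hw)
    · exact Or.inl (Or.inr (Or.inl hw))
    · rcases hv₁.eq_or_lt with rfl | hv₁
      · exact Or.inl (Or.inr (Or.inl (mk_neg_one_mem_outerFrame (Ioo_subset_Icc_self hc))))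
      rcases hv₂.eq_or_lt with rfl | hv₂
      exacts [Or.inl (Or.inl E.isArm₁.source_mem), Or.inr ⟨hc, hv₁, hv₂⟩]
    · exact Or.inl (Or.inl hw)
    · exact Or.inl (Or.inr hw)
  obtain hya | ⟨w, hw, hyw⟩ := hu.or_exists_mem E.isClosed_barrier
    (isOpen_Ioo.prod isOpen_Ioo) hcover fun hyE => hyx (E.eq_of_mem_barrier h hy hyE)
  · exact Or.inl hya
  · exact (E.unseparated_or_unseparated_of_below h hx hxa hxb hw hyw.right_notMem).imp
      hyw.trans hyw.trans

/-- The path along `outerFrame` from the lower to the upper tail of a cut that passes on the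
right. -/
def rightFrame (E : Cut D₁ D₂ x) : Set (ℝ × ℝ) :=
  Icc E.c₁ 2 ×ˢ {-1} ∪ {2} ×ˢ Icc (-1) 2 ∪ Icc E.c₂ 2 ×ˢ {2}

lemma rightFrame_subset_outerFrame (E : Cut D₁ D₂ x) : E.rightFrame ⊆ outerFrame := by
  have hc₁ : -1 ≤ E.c₁ := by linarith [E.c₁_mem.1]
  have hc₂ : -1 ≤ E.c₂ := by linarith [E.c₂_mem.1]
  rintro ⟨u, v⟩ ((⟨hu, rfl⟩ | ⟨rfl, hv⟩) | ⟨hu, rfl⟩)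
  exacts [mk_neg_one_mem_outerFrame (Icc_subset_Icc_left hc₁ hu), two_mk_mem_outerFrame hv,
    mk_two_mem_outerFrame (Icc_subset_Icc_left hc₂ hu)]

lemma isPreconnected_rightFrame (E : Cut D₁ D₂ x) : IsPreconnected E.rightFrame := by
  have hc₁ : E.c₁ ≤ 2 := by linarith [E.c₁_mem.2]
  have hc₂ : E.c₂ ≤ 2 := by linarith [E.c₂_mem.2]
  exact .union (2, 2) (Or.inr ⟨rfl, by norm_num⟩) ⟨⟨hc₂, le_rfl⟩, rfl⟩
    (.union (2, -1) ⟨⟨hc₁, le_rfl⟩, rfl⟩ ⟨rfl, by norm_num⟩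
      (isPreconnected_Icc.prod isPreconnected_singleton)
      (isPreconnected_singleton.prod isPreconnected_Icc))
    (isPreconnected_Icc.prod isPreconnected_singleton)

/-- The tails and arms of a cut, without the frame. -/
def spine (E : Cut D₁ D₂ x) : Set (ℝ × ℝ) :=
  ({E.c₁} ×ˢ Icc (-1) 0 ∪ E.A₁) ∪ ({E.c₂} ×ˢ Icc 1 2 ∪ E.A₂)

lemma spine_subset_barrier (E : Cut D₁ D₂ x) : E.spine ⊆ E.barrier :=
  union_subset_union subset_union_right subset_union_right

lemma isPreconnected_spine (E : Cut D₁ D₂ x) : IsPreconnected E.spine :=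
  .union x (Or.inr E.isArm₁.target_mem) (Or.inr E.isArm₂.target_mem)
    (.union (E.c₁, 0) ⟨rfl, by norm_num⟩ E.isArm₁.source_mem
      (isPreconnected_singleton.prod isPreconnected_Icc) E.isArm₁.isPreconnected)
    (.union (E.c₂, 1) ⟨rfl, by norm_num⟩ E.isArm₂.source_mem
      (isPreconnected_singleton.prod isPreconnected_Icc) E.isArm₂.isPreconnected)

lemma spine_subset (h : SqDecomp D₁ D₂ K a b) (E : Cut D₁ D₂ x) (hx : x ∈ K) :
    E.spine ⊆ Prod.fst ⁻¹' Ioo 0 1 ∪ unitSq := by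
  rintro ⟨u, v⟩ ((⟨rfl, -⟩ | hz) | ⟨rfl, -⟩ | hz)
  · exact Or.inl E.c₁_mem
  · exact Or.inr (E.isArm₁.subset_unitSq h hx hz)
  · exact Or.inl E.c₂_mem
  · exact Or.inr (E.isArm₂.subset_unitSq h.symm hx hz)

theorem not_unseparated (h : SqDecomp D₁ D₂ K a b) (E : Cut D₁ D₂ x) (hx : x ∈ K) :
    ¬ Unseparated E.barrier a b := by
  intro hab
  have hspine : ∀ z ∈ E.spine, (z.2 = a.2 → a.1 < z.1) ∧ (z.2 = b.2 → z.1 < b.1) := by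
    intro z hz
    have hza : z ≠ a := fun hza => hab.left_notMem (hza ▸ E.spine_subset_barrier hz)
    have hzb : z ≠ b := fun hzb => hab.right_notMem (hzb ▸ E.spine_subset_barrier hz)
    rw [h.ha.1, h.hb.1]
    rcases E.spine_subset h hx hz with hz₁ | hzI
    · exact ⟨fun _ => hz₁.1, fun _ => hz₁.2⟩
    · have hz₁ := (mem_unitSq.1 hzI).1
      exact ⟨fun hz₂ => hz₁.1.lt_of_ne' fun h₀ => hza (Prod.ext (h₀.trans h.ha.1.symm) hz₂),
        fun hz₂ => hz₁.2.lt_of_ne fun h₁ => hzb (Prod.ext (h₁.trans h.hb.1.symm) hz₂)⟩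
  have hright : ∀ z ∈ E.rightFrame, a.1 < z.1 ∧ (z.2 = b.2 → b.1 < z.1) := by
    have hb := h.hb.2
    rw [h.ha.1, h.hb.1]
    rintro ⟨u, v⟩ ((⟨hu, rfl⟩ | ⟨rfl, -⟩) | ⟨hu, rfl⟩)
    · exact ⟨E.c₁_mem.1.trans_le hu.1, fun hv => absurd hb.1 (by rw [← hv]; norm_num)⟩
    · norm_num
    · exact ⟨E.c₂_mem.1.trans_le hu.1, fun hv => by linarith [hb.2]⟩
  refine not_unseparated_of_crossing (e₁ := (E.c₁, -1)) (e₂ := (E.c₂, 2)) E.isClosed_barrier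
    E.isPreconnected_spine E.isPreconnected_rightFrame E.spine_subset_barrier
    (E.rightFrame_subset_outerFrame.trans E.frame_subset_barrier)
    (Or.inl (Or.inl ⟨rfl, by norm_num⟩)) (Or.inr (Or.inl ⟨rfl, by norm_num⟩))
    (Or.inl (Or.inl ⟨⟨le_rfl, by linarith [E.c₁_mem.2]⟩, rfl⟩))
    (Or.inr ⟨⟨le_rfl, by linarith [E.c₂_mem.2]⟩, rfl⟩)
    (by linarith [h.hb.2.1]) (by linarith [h.hb.2.2])
    (fun z hz => (hspine z hz).1) (fun z hz => (hspine z hz).2)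
    (fun z hz _ => (hright z hz).1) (fun z hz => (hright z hz).2) hab

end Cut

/-! ### Accumulation of `K` on both sides of a cut -/

lemma SqDecomp.subset_or_subset {D₁ D₂ K S : Set (ℝ × ℝ)} {a b : ℝ × ℝ}
    (h : SqDecomp D₁ D₂ K a b) (hS : IsPreconnected S) (hSI : S ⊆ unitSq) (hSK : Disjoint S K) :
    S ⊆ D₁ ∨ S ⊆ D₂ := by
  have hS' : S ⊆ D₁ ∪ D₂ := fun z hz =>
    (h.cover ▸ hSI hz : z ∈ D₁ ∪ D₂ ∪ K).resolve_right (disjoint_left.1 hSK hz)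
  obtain ⟨U, hU, hUD⟩ := h.open₁
  obtain ⟨V, hV, hVD⟩ := h.open₂
  by_contra! hne
  obtain ⟨p, hp, hp₁⟩ := not_subset.1 hne.1
  obtain ⟨q, hq, hq₂⟩ := not_subset.1 hne.2
  have hpV : p ∈ V := (hVD ▸ (hS' hp).resolve_left hp₁ : p ∈ V ∩ unitSq).1
  have hqU : q ∈ U := (hUD ▸ (hS' hq).resolve_right hq₂ : q ∈ U ∩ unitSq).1
  have hSUV : S ⊆ U ∪ V := fun z hz => (hS' hz).imp (fun hz => (hUD ▸ hz : z ∈ U ∩ unitSq).1)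
    fun hz => (hVD ▸ hz : z ∈ V ∩ unitSq).1
  obtain ⟨w, hw, hwU, hwV⟩ := hS U V hU hV hSUV ⟨q, hq, hqU⟩ ⟨p, hp, hpV⟩
  exact disjoint_left.1 h.disj (hUD.superset ⟨hwU, hSI hw⟩) (hVD.superset ⟨hwV, hSI hw⟩)

/-- A square decomposition with the closed bottom side in `D₁` and the closed top side in `D₂`. -/
structure UprightDecomp (D₁ D₂ K : Set (ℝ × ℝ)) (a b : ℝ × ℝ) : Prop extends
    SqDecomp D₁ D₂ K a b where
  bot : ∀ u ∈ Icc (0 : ℝ) 1, (u, 0) ∈ D₁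
  top : ∀ u ∈ Icc (0 : ℝ) 1, (u, 1) ∈ D₂

lemma UprightDecomp.snd_mem_Ioo {D₁ D₂ K : Set (ℝ × ℝ)} {a b z : ℝ × ℝ}
    (h : UprightDecomp D₁ D₂ K a b) (hz : z ∈ K) : z.2 ∈ Ioo (0 : ℝ) 1 := by
  obtain ⟨hz₁, hz₂⟩ := mem_unitSq.1 (h.K_subset_unitSq hz)
  refine ⟨hz₂.1.lt_of_ne fun h₀ => ?_, hz₂.2.lt_of_ne fun h₁ => ?_⟩
  · exact disjoint_left.1 h.disjoint_K (h.bot z.1 hz₁) (by rwa [h₀])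
  · exact disjoint_left.1 h.symm.disjoint_K (h.top z.1 hz₁) (by rwa [← h₁])

/-- The nearest-point retraction of the plane onto the unit square. -/
noncomputable def clampSq (z : ℝ × ℝ) : ℝ × ℝ :=
  (projIcc 0 1 zero_le_one z.1, projIcc 0 1 zero_le_one z.2)

lemma continuous_clampSq : Continuous clampSq := by
  have hproj : Continuous (projIcc (0 : ℝ) 1 zero_le_one) := continuous_projIcc
  exact (continuous_subtype_val.comp (hproj.comp continuous_fst)).prodMk
    (continuous_subtype_val.comp (hproj.comp continuous_snd))

lemma clampSq_mem_unitSq (z : ℝ × ℝ) : clampSq z ∈ unitSq :=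
  mem_unitSq.2 ⟨Subtype.coe_prop _, Subtype.coe_prop _⟩

lemma clampSq_of_mem {z : ℝ × ℝ} (hz : z ∈ unitSq) : clampSq z = z := by
  rw [mem_unitSq] at hz
  rw [clampSq, projIcc_of_mem _ hz.1, projIcc_of_mem _ hz.2]

lemma coe_projIcc_eq_self {α : Type*} [LinearOrder α] {a b t : α} (hab : a ≤ b)
    (ht : (projIcc a b hab t : α) ∈ Ioo a b) : (projIcc a b hab t : α) = t := by
  rcases le_total t a with hta | hat
  · rw [projIcc_of_le_left hab hta] at ht
    exact absurd ht.1 (lt_irrefl a)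
  rcases le_total b t with hbt | htb
  · rw [projIcc_of_right_le hab hbt] at ht
    exact absurd ht.2 (lt_irrefl b)
  rw [projIcc_of_mem hab ⟨hat, htb⟩]

lemma mem_unitSq_of_clampSq_mem_interior {z : ℝ × ℝ} (hz : clampSq z ∈ interior unitSq) :
    z ∈ unitSq := by
  rw [interior_unitSq] at hz
  have hz' : clampSq z = z :=
    Prod.ext (coe_projIcc_eq_self zero_le_one hz.1) (coe_projIcc_eq_self zero_le_one hz.2)
  exact hz' ▸ clampSq_mem_unitSq z

lemma le_zero_of_clampSq_mem_leftEdge {z : ℝ × ℝ} (hz : clampSq z ∈ leftEdge) :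
    z.1 ≤ 0 ∧ z.2 = (clampSq z).2 :=
  ⟨(projIcc_eq_left zero_lt_one).1 (Subtype.ext hz.1), (coe_projIcc_eq_self zero_le_one hz.2).symm⟩

lemma one_le_of_clampSq_mem_rightEdge {z : ℝ × ℝ} (hz : clampSq z ∈ rightEdge) :
    1 ≤ z.1 ∧ z.2 = (clampSq z).2 :=
  ⟨(projIcc_eq_right zero_lt_one).1 (Subtype.ext hz.1), (coe_projIcc_eq_self zero_le_one hz.2).symm⟩

lemma SqDecomp.mem_box_of_clampSq_mem {D₁ D₂ K : Set (ℝ × ℝ)} {a b z : ℝ × ℝ}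
    (h : SqDecomp D₁ D₂ K a b) (hz : z ∈ outerSq) (hzI : z ∉ unitSq) (hzK : clampSq z ∈ K) :
    (z ∈ leftBox ∧ z.2 = a.2) ∨ (z ∈ rightBox ∧ z.2 = b.2) := by
  rcases h.eq_or_eq_or_mem_interior hzK with hza | hzb | hzi
  · obtain ⟨hz₁, hz₂⟩ := le_zero_of_clampSq_mem_leftEdge (hza ▸ h.ha)
    rw [hza] at hz₂
    refine Or.inl ⟨⟨⟨hz.1.1, hz₁.lt_of_ne fun h₀ => hzI ?_⟩, hz.2⟩, hz₂⟩
    rw [show z = a from Prod.ext (h₀.trans h.ha.1.symm) hz₂]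
    exact h.K_subset_unitSq h.a_mem
  · obtain ⟨hz₁, hz₂⟩ := one_le_of_clampSq_mem_rightEdge (hzb ▸ h.hb)
    rw [hzb] at hz₂
    refine Or.inr ⟨⟨⟨hz₁.lt_of_ne fun h₁ => hzI ?_, hz.1.2⟩, hz.2⟩, hz₂⟩
    rw [show z = b from Prod.ext (h₁.symm.trans h.hb.1.symm) hz₂]
    exact h.K_subset_unitSq h.b_mem
  · exact absurd (mem_unitSq_of_clampSq_mem_interior hzi) hzI

lemma UprightDecomp.exists_clampSq_mem_K {D₁ D₂ K S : Set (ℝ × ℝ)} {a b p q : ℝ × ℝ}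
    (h : UprightDecomp D₁ D₂ K a b) (hS : IsPreconnected S) (hpS : p ∈ S) (hqS : q ∈ S)
    (hp : p.2 ≤ 0) (hq : 1 ≤ q.2) : ∃ z ∈ S, clampSq z ∈ K := by
  by_contra! hSK
  have hpD : clampSq p ∈ D₁ := by
    rw [clampSq, projIcc_of_le_left _ hp]
    exact h.bot _ (Subtype.coe_prop _)
  have hqD : clampSq q ∈ D₂ := by
    rw [clampSq, projIcc_of_right_le _ hq]
    exact h.top _ (Subtype.coe_prop _)
  rcases h.subset_or_subset (hS.image clampSq continuous_clampSq.continuousOn)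
      (image_subset_iff.2 fun z _ => clampSq_mem_unitSq z)
      (disjoint_left.2 <| forall_mem_image.2 hSK) with hS₁ | hS₂
  · exact disjoint_left.1 h.disj (hS₁ (mem_image_of_mem _ hqS)) hqD
  · exact disjoint_left.1 h.disj hpD (hS₂ (mem_image_of_mem _ hpS))

namespace Cut

variable {D₁ D₂ K N : Set (ℝ × ℝ)} {a b e f p q x : ℝ × ℝ}

lemma spine_inter_outerFrame_subset (h : SqDecomp D₁ D₂ K a b) (E : Cut D₁ D₂ x) (hx : x ∈ K) :
    E.spine ∩ outerFrame ⊆ {z | z.2 ∉ Ioo (0 : ℝ) 1} := by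
  rintro z ⟨((⟨-, hz⟩ | hz) | ⟨-, hz⟩ | hz), hzF⟩ ⟨hz₀, hz₁⟩
  · exact hz.2.not_gt hz₀
  · exact disjoint_left.1 disjoint_outerSq_outerFrame
      (unitSq_subset_outerSq (E.isArm₁.subset_unitSq h hx hz)) hzF
  · exact hz.1.not_gt hz₁
  · exact disjoint_left.1 disjoint_outerSq_outerFrame
      (unitSq_subset_outerSq (E.isArm₂.subset_unitSq h.symm hx hz)) hzF

-- The spine of the cut, prolonged by the half planes below and above the square, avoids `N`.
lemma unseparated_of_subset_Ioo (h : SqDecomp D₁ D₂ K a b) (E : Cut D₁ D₂ x) (hx : x ∈ K)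
    (hN : ∀ z ∈ N, z.2 ∈ Ioo (0 : ℝ) 1) (hEN : E.barrier ∩ N ⊆ outerFrame) (hp : p.2 < 0)
    (hq : 1 < q.2) : Unseparated N p q := by
  have hbelow : Disjoint {z : ℝ × ℝ | z.2 < 0} N :=
    disjoint_left.2 fun z hz hzN => (hN z hzN).1.not_gt hz
  have habove : Disjoint {z : ℝ × ℝ | 1 < z.2} N :=
    disjoint_left.2 fun z hz hzN => (hN z hzN).2.not_gt hz
  have hspine : Disjoint E.spine N := disjoint_left.2 fun z hz hzN =>
    E.spine_inter_outerFrame_subset h hx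
      ⟨hz, hEN ⟨E.spine_subset_barrier hz, hzN⟩⟩ (hN z hzN)
  have hconvex : ∀ s : Set ℝ, Convex ℝ s → IsPreconnected (Prod.snd ⁻¹' s : Set (ℝ × ℝ)) :=
    fun s hs => (hs.linear_preimage (LinearMap.snd ℝ ℝ ℝ)).isPreconnected
  have hlower : Unseparated N p (E.c₁, -1) :=
    .of_isPreconnected (hconvex _ (convex_Iio 0)) hbelow hp (show (-1 : ℝ) < 0 by norm_num)
  have hmiddle : Unseparated N (E.c₁, -1) (E.c₂, 2) :=
    .of_isPreconnected E.isPreconnected_spine hspine (Or.inl (Or.inl ⟨rfl, by norm_num⟩))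
      (Or.inr (Or.inl ⟨rfl, by norm_num⟩))
  have hupper : Unseparated N (E.c₂, 2) q :=
    .of_isPreconnected (hconvex _ (convex_Ioi 1)) habove (show (1 : ℝ) < 2 by norm_num) hq
  exact (hlower.trans hmiddle).trans hupper

lemma isClosed_setOf_mem_unseparated (h : SqDecomp D₁ D₂ K a b) (E : Cut D₁ D₂ x)
    (hxe : x ∉ closure {z | z ∈ K ∧ Unseparated E.barrier e z}) :
    IsClosed {z | z ∈ K ∧ Unseparated E.barrier e z} := by
  refine isClosed_of_closure_subset fun z hz => ?_
  have hzK : z ∈ K := closure_minimal (fun w hw => hw.1) h.isClosed_K hz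
  exact ⟨hzK, .of_mem_closure E.isClosed_barrier (closure_mono (fun w hw => hw.2) hz) fun hzE =>
    hxe (E.eq_of_mem_barrier h hzK hzE ▸ hz)⟩

/- If the side `M` of `e` in `K` did not accumulate at `x`, Janiszewski's theorem for the barrier
and `M ∪ R` would join `p` to `q` by a connected set whose retract to the square misses `K`. -/
lemma mem_closure_of_ray {R : Set (ℝ × ℝ)} (h : UprightDecomp D₁ D₂ K a b) (E : Cut D₁ D₂ x)
    (hx : x ∈ K) (he : e ∈ K) (hR : IsClosed R) (hR₂ : ∀ z ∈ R, z.2 ∈ Ioo (0 : ℝ) 1)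
    (hf : f ∈ outerFrame) (hER : E.barrier ∩ R ⊆ {f})
    (hray : ∀ z, Unseparated E.barrier e z → z ∉ unitSq → clampSq z ∈ K → z ∈ R)
    (hp : p.2 < 0) (hq : 1 < q.2) (hep : Unseparated E.barrier e p)
    (heq : Unseparated E.barrier e q) : x ∈ closure {z | z ∈ K ∧ Unseparated E.barrier e z} := by
  by_contra hxe
  set M := {z | z ∈ K ∧ Unseparated E.barrier e z}
  have hM : IsClosed M := E.isClosed_setOf_mem_unseparated h.toSqDecomp hxe
  have hEN : E.barrier ∩ (M ∪ R) ⊆ {f} := by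
    rintro z ⟨hzE, hzM | hzR⟩
    exacts [absurd hzE hzM.2.right_notMem, hER ⟨hzE, hzR⟩]
  have heO := unitSq_subset_outerSq (h.K_subset_unitSq he)
  have hN : ∀ z ∈ M ∪ R, z.2 ∈ Ioo (0 : ℝ) 1 := by
    rintro z (hz | hz)
    exacts [h.snd_mem_Ioo hz.1, hR₂ z hz]
  have hpq : Unseparated (E.barrier ∪ (M ∪ R)) p q :=
    .union_of_outerFrame E.isClosed_barrier (hM.union hR)
      (subsingleton_of_subset_singleton hEN).isPreconnected
      (E.frame_subset_barrier.trans subset_union_left)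
      (hep.mem_outerSq E.frame_subset_barrier heO) (hep.symm.trans heq)
      (E.unseparated_of_subset_Ioo h.toSqDecomp hx hN
        (hEN.trans (singleton_subset_iff.2 hf)) hp hq)
  obtain ⟨z, hz, hzK⟩ := h.exists_clampSq_mem_K isPreconnected_connectedComponentIn
    (mem_connectedComponentIn hpq.left_notMem) hpq hp.le hq.le
  have hpz : Unseparated (E.barrier ∪ (M ∪ R)) p z := hz
  have hez := hep.trans (hpz.mono subset_union_left)
  by_cases hzI : z ∈ unitSq
  · rw [clampSq_of_mem hzI] at hzK
    exact hpz.right_notMem (Or.inr (Or.inl ⟨hzK, hez⟩))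
  · exact hpz.right_notMem (Or.inr (Or.inr (hray z hez hzI hzK)))

theorem mem_closure_left (h : UprightDecomp D₁ D₂ K a b) (E : Cut D₁ D₂ x) (hx : x ∈ K)
    (hxa : x ≠ a) (hxb : x ≠ b) : x ∈ closure {z | z ∈ K ∧ Unseparated E.barrier a z} := by
  have hleft : ∀ z ∈ leftBox, Unseparated E.barrier a z := fun z hz =>
    (E.unseparated_of_mem_leftBox h.toSqDecomp hx hxa hz).symm
  have ha : a.2 ∈ Ioo 0 1 := h.ha.2
  refine E.mem_closure_of_ray h hx h.a_mem (R := Icc (-1) 0 ×ˢ {a.2}) (f := (-1, a.2))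
    (p := (-1 / 2, -1 / 2)) (q := (-1 / 2, 3 / 2)) (isClosed_Icc.prod isClosed_singleton)
    (fun z hz => hz.2 ▸ ha) (neg_one_mk_mem_outerFrame ⟨by linarith [ha.1], by linarith [ha.2]⟩)
    ?_ ?_ (by norm_num) (by norm_num) (hleft _ (by norm_num [leftBox]))
    (hleft _ (by norm_num [leftBox]))
  · rintro ⟨u, v⟩ ⟨hzE, ⟨hu₁, hu₂⟩, rfl⟩
    rcases hu₁.eq_or_lt with rfl | hu₁
    · rfl
    rcases hu₂.eq_or_lt with rfl | hu₂
    · rw [show (0, a.2) = a from Prod.ext h.ha.1.symm rfl] at hzE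
      exact absurd (E.eq_of_mem_barrier h.toSqDecomp h.a_mem hzE).symm hxa
    · exact absurd hzE
        (hleft _ ⟨⟨hu₁, hu₂⟩, by linarith [ha.1], by linarith [ha.2]⟩).right_notMem
  · intro z haz hzI hzK
    rcases h.mem_box_of_clampSq_mem (haz.mem_outerSq E.frame_subset_barrier
        (unitSq_subset_outerSq (h.K_subset_unitSq h.a_mem))) hzI hzK with ⟨hz, hz₂⟩ | ⟨hz, -⟩
    · exact ⟨Ioo_subset_Icc_self hz.1, hz₂⟩
    · exact absurd (haz.trans (E.unseparated_of_mem_rightBox h.toSqDecomp hx hxb hz))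
        (E.not_unseparated h.toSqDecomp hx)

theorem mem_closure_right (h : UprightDecomp D₁ D₂ K a b) (E : Cut D₁ D₂ x) (hx : x ∈ K)
    (hxa : x ≠ a) (hxb : x ≠ b) : x ∈ closure {z | z ∈ K ∧ Unseparated E.barrier b z} := by
  have hright : ∀ z ∈ rightBox, Unseparated E.barrier b z := fun z hz =>
    (E.unseparated_of_mem_rightBox h.toSqDecomp hx hxb hz).symm
  have hb : b.2 ∈ Ioo 0 1 := h.hb.2
  refine E.mem_closure_of_ray h hx h.b_mem (R := Icc 1 2 ×ˢ {b.2}) (f := (2, b.2))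
    (p := (3 / 2, -1 / 2)) (q := (3 / 2, 3 / 2)) (isClosed_Icc.prod isClosed_singleton)
    (fun z hz => hz.2 ▸ hb) (two_mk_mem_outerFrame ⟨by linarith [hb.1], by linarith [hb.2]⟩)
    ?_ ?_ (by norm_num) (by norm_num) (hright _ (by norm_num [rightBox]))
    (hright _ (by norm_num [rightBox]))
  · rintro ⟨u, v⟩ ⟨hzE, ⟨hu₁, hu₂⟩, rfl⟩
    rcases hu₂.eq_or_lt with rfl | hu₂
    · rfl
    rcases hu₁.eq_or_lt with rfl | hu₁
    · rw [show (1, b.2) = b from Prod.ext h.hb.1.symm rfl] at hzE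
      exact absurd (E.eq_of_mem_barrier h.toSqDecomp h.b_mem hzE).symm hxb
    · exact absurd hzE
        (hright _ ⟨⟨hu₁, hu₂⟩, by linarith [hb.1], by linarith [hb.2]⟩).right_notMem
  · intro z hbz hzI hzK
    rcases h.mem_box_of_clampSq_mem (hbz.mem_outerSq E.frame_subset_barrier
        (unitSq_subset_outerSq (h.K_subset_unitSq h.b_mem))) hzI hzK with ⟨hz, -⟩ | ⟨hz, hz₂⟩
    · exact absurd (hbz.trans (E.unseparated_of_mem_leftBox h.toSqDecomp hx hxa hz)).symm
        (E.not_unseparated h.toSqDecomp hx)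
    · exact ⟨Ioo_subset_Icc_self hz.1, hz₂⟩

end Cut

/-! ### Arcs -/

/-- `γ` parametrizes an arc by `[l, r]`. It runs from `q` to `x` and stays in `T` until it reaches
`x`, which may lie outside `T`. -/
structure IsArc {X : Type*} [TopologicalSpace X] (T : Set X) (q x : X) (l r : ℝ) (γ : ℝ → X) :
    Prop where
  lt : l < r
  continuousOn : ContinuousOn γ (Icc l r)
  injOn : InjOn γ (Icc l r)
  left : γ l = q
  right : γ r = x
  mem : ∀ t ∈ Ico l r, γ t ∈ T

/-- An arc runs from `q` to `x` and stays in `T` until it reaches `x`. -/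
def ArcTo {X : Type*} [TopologicalSpace X] (T : Set X) (q x : X) : Prop :=
  ∃ γ : ℝ → X, IsArc T q x 0 1 γ

lemma exists_continuousOn_injOn_eqOn {ι X : Type*} [LinearOrder ι] [TopologicalSpace ι]
    [OrderClosedTopology ι] [TopologicalSpace X] {f g : ι → X} {l m r : ι} (hlm : l ≤ m)
    (hmr : m ≤ r) (hf : ContinuousOn f (Icc l m)) (hg : ContinuousOn g (Icc m r))
    (hfi : InjOn f (Icc l m)) (hgi : InjOn g (Icc m r)) (hfg : f m = g m)
    (hd : ∀ s ∈ Ico l m, ∀ t ∈ Icc m r, f s ≠ g t) :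
    ∃ φ : ι → X, ContinuousOn φ (Icc l r) ∧ InjOn φ (Icc l r) ∧ EqOn φ f (Icc l m) ∧
      EqOn φ g (Icc m r) := by
  classical
  have hφf : EqOn ((Iic m).piecewise f g) f (Icc l m) :=
    (piecewise_eqOn _ f g).mono Icc_subset_Iic_self
  have hφg : EqOn ((Iic m).piecewise f g) g (Icc m r) := fun t ht => by
    rcases ht.1.eq_or_lt with rfl | hmt
    · rw [piecewise_eq_of_mem _ _ _ self_mem_Iic, hfg]
    · exact piecewise_eq_of_notMem _ _ _ hmt.not_ge
  refine ⟨_, ?_, ?_, hφf, hφg⟩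
  · rw [← Icc_union_Icc_eq_Icc hlm hmr]
    exact (hf.congr hφf).union_of_isClosed (hg.congr hφg) isClosed_Icc isClosed_Icc
  · rw [← Ico_union_Icc_eq_Icc hlm hmr, injOn_union (Set.disjoint_left.2 fun t ht ht' =>
      ht.2.not_ge ht'.1), hφg.injOn_iff]
    refine ⟨(hfi.congr hφf.symm).mono Ico_subset_Icc_self, hgi, fun s hs t ht => ?_⟩
    rw [hφf (Ico_subset_Icc_self hs), hφg ht]
    exact hd s hs t ht

namespace IsArc

variable {X : Type*} [TopologicalSpace X] {T : Set X} {q x : X} {l r : ℝ} {γ : ℝ → X}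

lemma arcTo (h : IsArc T q x l r γ) : ArcTo T q x := by
  have hlr := sub_pos.2 h.lt
  have hmaps : MapsTo (fun t : ℝ => l + t * (r - l)) (Icc 0 1) (Icc l r) := fun t ht =>
    ⟨by nlinarith [ht.1], by nlinarith [ht.2]⟩
  refine ⟨fun t => γ (l + t * (r - l)), one_pos, h.continuousOn.comp (by fun_prop) hmaps,
    fun u hu v hv huv => ?_, by simp [h.left], by simp [h.right],
    fun t ht => h.mem _ ⟨by nlinarith [ht.1], by nlinarith [ht.2]⟩⟩
  exact mul_right_cancel₀ hlr.ne' (add_left_cancel (h.injOn (hmaps hu) (hmaps hv) huv))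

lemma mem_or_eq (h : IsArc T q x l r γ) {t : ℝ} (ht : t ∈ Icc l r) : γ t ∈ T ∨ t = r :=
  ht.2.eq_or_lt.symm.imp (fun htr => h.mem t ⟨ht.1, htr⟩) id

lemma isClosed_image [T2Space X] (h : IsArc T q x l r γ) : IsClosed (γ '' Icc l r) :=
  (isCompact_Icc.image_of_continuousOn h.continuousOn).isClosed

end IsArc

lemma isPreconnected_inter_interior {V : Type*} [NormedAddCommGroup V] [NormedSpace ℝ V]
    {Q U : Set V} (hU : IsOpen U) (hQ : Convex ℝ Q) (h : IsPreconnected (U ∩ Q)) :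
    IsPreconnected (U ∩ interior Q) := by
  rcases (interior Q).eq_empty_or_nonempty with hempty | hne
  · simp [hempty, isPreconnected_empty]
  refine isPreconnected_iff_subset_of_disjoint.2 fun u v hu hv huv hdisj => ?_
  have hlocal : U ∩ Q ⊆ {z | ∀ᶠ w in 𝓝 z, w ∈ interior Q → w ∈ u} ∪
      {z | ∀ᶠ w in 𝓝 z, w ∈ interior Q → w ∈ v} := fun z hz => by
    obtain ⟨ε, hε, hεU⟩ := Metric.isOpen_iff.1 hU z hz.1
    have hsub : ball z ε ∩ interior Q ⊆ U ∩ interior Q := inter_subset_inter_left _ hεU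
    refine (isPreconnected_iff_subset_of_disjoint.1
      ((convex_ball z ε).inter hQ.interior).isPreconnected u v hu hv (hsub.trans huv)
      (subset_empty_iff.1 (hdisj ▸ inter_subset_inter_left _ hsub))).imp ?_ ?_ <;>
    exact fun hball => mem_of_superset (ball_mem_nhds z hε) fun w hw hwQ => hball ⟨hw, hwQ⟩
  refine (isPreconnected_iff_subset_of_disjoint.1 h _ _ isOpen_setOfPred_eventually_nhds
    isOpen_setOfPred_eventually_nhds hlocal (eq_empty_iff_forall_notMem.2 ?_)).imp ?_ ?_
  · rintro z ⟨hz, hzu, hzv⟩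
    have hz' : z ∈ closure (interior Q) :=
      (hQ.closure_interior_eq_closure_of_nonempty_interior hne).superset (subset_closure hz.2)
    obtain ⟨w, hwQ, hwU, hwu, hwv⟩ := ((mem_closure_iff_frequently.1 hz').and_eventually
      ((hU.eventually_mem hz.1).and (hzu.and hzv))).exists
    exact hdisj.subset ⟨⟨hwU, hwQ⟩, hwu hwQ, hwv hwQ⟩
  all_goals exact fun hD z hz => (hD ⟨hz.1, interior_subset hz.2⟩).self_of_nhds hz.2

namespace ArcTo

section TopologicalSpace

variable {X : Type*} [TopologicalSpace X] {D S T : Set X} {q x : X}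

lemma mono (h : ArcTo S q x) (hST : S ⊆ T) : ArcTo T q x :=
  h.imp fun _ hγ => { hγ with mem := fun t ht => hST (hγ.mem t ht) }

lemma exists_path_through {p : X} (h₁ : ArcTo S p x) (h₂ : ArcTo T q x) (hST : Disjoint S T) :
    ∃ φ : ℝ → X, ContinuousOn φ (Icc 0 1) ∧ InjOn φ (Icc 0 1) ∧ φ 0 = p ∧ φ (1 / 2) = x ∧ φ 1 = q ∧
      (∀ t ∈ Ico (0 : ℝ) (1 / 2), φ t ∈ S) ∧ ∀ t ∈ Ioc (1 / 2 : ℝ) 1, φ t ∈ T := by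
  obtain ⟨α, hα⟩ := h₁
  obtain ⟨β, hβ⟩ := h₂
  have hmα : MapsTo (fun t : ℝ => 2 * t) (Icc 0 (1 / 2)) (Icc 0 1) := fun t ht =>
    ⟨by linarith [ht.1], by linarith [ht.2]⟩
  have hmβ : MapsTo (fun t : ℝ => 2 - 2 * t) (Icc (1 / 2) 1) (Icc 0 1) := fun t ht =>
    ⟨by linarith [ht.2], by linarith [ht.1]⟩
  have hαS : ∀ t ∈ Ico (0 : ℝ) (1 / 2), α (2 * t) ∈ S := fun t ht =>
    hα.mem _ ⟨by linarith [ht.1], by linarith [ht.2]⟩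
  have hβT : ∀ t ∈ Ioc (1 / 2 : ℝ) 1, β (2 - 2 * t) ∈ T := fun t ht =>
    hβ.mem _ ⟨by linarith [ht.2], by linarith [ht.1]⟩
  have hαβ : ∀ s ∈ Ico (0 : ℝ) (1 / 2), ∀ t ∈ Icc (1 / 2 : ℝ) 1, α (2 * s) ≠ β (2 - 2 * t) := by
    intro s hs t ht hst
    rcases ht.1.eq_or_lt with rfl | htlt
    · have hs_eq : 2 * s = 1 := hα.injOn (hmα (Ico_subset_Icc_self hs)) ⟨zero_le_one, le_rfl⟩ <| by
        rw [hst, hα.right, ← hβ.right]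
        norm_num
      linarith [hs.2]
    · exact Set.disjoint_left.1 hST (hαS s hs) (hst ▸ hβT t ⟨htlt, ht.2⟩)
  obtain ⟨φ, hφ, hφi, hφα, hφβ⟩ := exists_continuousOn_injOn_eqOn (f := fun t => α (2 * t))
    (g := fun t => β (2 - 2 * t)) (l := 0) (m := 1 / 2) (r := 1) (by norm_num) (by norm_num)
    (hα.continuousOn.comp (by fun_prop) hmα) (hβ.continuousOn.comp (by fun_prop) hmβ)
    (hα.injOn.comp (mul_right_injective₀ two_ne_zero).injOn hmα)
    (hβ.injOn.comp (sub_right_injective.comp (mul_right_injective₀ two_ne_zero)).injOn hmβ)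
    (by norm_num [hα.right, hβ.right]) hαβ
  refine ⟨φ, hφ, hφi, ?_, ?_, ?_, fun t ht => ?_, fun t ht => ?_⟩
  · simp [hφα (show (0 : ℝ) ∈ Icc 0 (1 / 2) by norm_num), hα.left]
  · exact (hφα ⟨by norm_num, le_rfl⟩).trans (by norm_num [hα.right])
  · simp [hφβ (show (1 : ℝ) ∈ Icc (1 / 2) 1 by norm_num), hβ.left]
  · exact (hφα (Ico_subset_Icc_self ht)).symm ▸ hαS t ht
  · exact (hφβ (Ioc_subset_Icc_self ht)).symm ▸ hβT t ht

lemma of_accessible (h : Accessible D x) (hT : T ∈ 𝓝 x) : ∃ q ∈ D ∩ T, ArcTo (D ∩ T) q x := by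
  obtain ⟨φ, hφ, hinj, -, hD, rfl⟩ := h
  have hφ' : Continuous fun t : ℝ => φ (projIcc 0 1 zero_le_one t) := hφ.comp continuous_projIcc
  have hone : projIcc (0 : ℝ) 1 zero_le_one 1 = 1 := projIcc_right zero_le_one
  obtain ⟨l, hl, hlT⟩ : ∃ l < (1 : ℝ), Icc l 1 ⊆ {t | φ (projIcc 0 1 zero_le_one t) ∈ T} :=
    (mem_nhdsLE_iff_exists_Icc_subset.1 <| mem_nhdsWithin_of_mem_nhds <|
      hφ'.continuousAt.preimage_mem_nhds <| by rwa [hone])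
  have hsub : Icc (max 0 l) 1 ⊆ Icc (0 : ℝ) 1 := Icc_subset_Icc_left (le_max_left _ _)
  have hlt : max 0 l < 1 := max_lt one_pos hl
  have hmem : ∀ t ∈ Ico (max 0 l) 1, φ (projIcc 0 1 zero_le_one t) ∈ D ∩ T := fun t ht => by
    refine ⟨hD _ ?_, hlT ⟨(le_max_right _ _).trans ht.1, ht.2.le⟩⟩
    rw [projIcc_of_mem zero_le_one (hsub (Ico_subset_Icc_self ht))]
    exact ht.2
  exact ⟨_, hmem _ ⟨le_rfl, hlt⟩, IsArc.arcTo ⟨hlt, hφ'.continuousOn,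
    hinj.comp_injOn ((strictMonoOn_projIcc zero_le_one).injOn.mono hsub), rfl,
    congrArg φ hone, hmem⟩⟩

end TopologicalSpace

section NormedSpace

variable {V : Type*} [NormedAddCommGroup V] [NormedSpace ℝ V] {T : Set V} {q w x : V}

/-- The new arc follows the segment up to its first point on the old arc. -/
lemma of_segment (h : ArcTo T w x) (hx : x ∉ T) (hqw : segment ℝ q w ⊆ T) : ArcTo T q x := by
  by_cases hne : q = w
  · exact hne ▸ h
  obtain ⟨γ, hγ⟩ := h
  have hσ : Continuous (AffineMap.lineMap q w : ℝ → V) := AffineMap.lineMap_continuous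
  have hσT : ∀ t ∈ Icc (0 : ℝ) 1, AffineMap.lineMap q w t ∈ T := fun t ht =>
    hqw (segment_eq_image_lineMap ℝ q w ▸ mem_image_of_mem _ ht)
  obtain ⟨t₀, ⟨ht₀, s₀, hs₀, hst⟩, hmin⟩ :=
    (isCompact_Icc.inter_right (hγ.isClosed_image.preimage hσ)).exists_isLeast
      (⟨1, by simp, 0, by simp, by simp [hγ.left]⟩ :
        (Icc (0 : ℝ) 1 ∩ (AffineMap.lineMap q w : ℝ → V) ⁻¹' (γ '' Icc 0 1)).Nonempty)
  have hs₀_lt : s₀ < 1 := hs₀.2.lt_of_ne fun hs => hx <| by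
    rw [← hγ.right, ← hs, hst]
    exact hσT t₀ ht₀
  have hsub : Icc s₀ 1 ⊆ Icc 0 1 := Icc_subset_Icc_left hs₀.1
  obtain ⟨φ, hφ, hφi, hφσ, hφγ⟩ := exists_continuousOn_injOn_eqOn
    (f := fun s => AffineMap.lineMap q w (s - (s₀ - t₀))) (l := s₀ - t₀) (by linarith [ht₀.1])
    hs₀_lt.le (by fun_prop) (hγ.continuousOn.mono hsub)
    ((AffineMap.lineMap_injective ℝ hne).comp (sub_left_injective)).injOn
    (hγ.injOn.mono hsub) (by simp [hst]) fun s hs t ht hst' => by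
      have := hmin ⟨⟨by linarith [hs.1], by linarith [hs.2, ht₀.2]⟩, t, hsub ht, hst'.symm⟩
      linarith [hs.2]
  refine IsArc.arcTo ⟨by linarith [ht₀.1], hφ, hφi, ?_, ?_, fun s hs => ?_⟩
  · rw [hφσ ⟨le_rfl, by linarith [ht₀.1]⟩]
    simp
  · rw [hφγ ⟨hs₀_lt.le, le_rfl⟩, hγ.right]
  · rcases le_total s s₀ with hss | hss
    · rw [hφσ ⟨hs.1, hss⟩]
      exact hσT _ ⟨by linarith [hs.1], by linarith [ht₀.2]⟩
    · rw [hφγ ⟨hss, hs.2.le⟩]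
      exact hγ.mem s ⟨hs₀.1.trans hss, hs.2⟩

lemma of_isPreconnected {p : V} (hT : IsOpen T) (hT' : IsPreconnected T) (hx : x ∉ T) (hp : p ∈ T)
    (hq : q ∈ T) (h : ArcTo T p x) : ArcTo T q x := by
  refine (hT'.induction₂ (fun v w => ArcTo T v x ↔ ArcTo T w x) (fun v hv => ?_)
    (fun _ _ _ _ _ _ => Iff.trans) (fun _ _ _ _ => Iff.symm) hp hq).1 h
  obtain ⟨ε, hε, hεT⟩ := Metric.isOpen_iff.1 hT v hv
  filter_upwards [mem_nhdsWithin_of_mem_nhds (ball_mem_nhds v hε)] with w hw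
  have hseg := (convex_ball v ε).segment_subset (mem_ball_self hε) hw
  exact ⟨fun hv => hv.of_segment hx (segment_symm ℝ v w ▸ hseg.trans hεT),
    fun hw => hw.of_segment hx (hseg.trans hεT)⟩

theorem exists_of_accessible {Q U : Set V} (hU : IsOpen U) (hQ : Convex ℝ Q)
    (hUQ : IsPreconnected (U ∩ Q)) (hx : x ∉ U ∩ Q) (hxQ : x ∈ interior Q)
    (hacc : Accessible (U ∩ Q) x) (hq : q ∈ U ∩ Q) : ArcTo (U ∩ insert q (interior Q)) q x := by
  obtain ⟨p, ⟨⟨hpU, -⟩, hpQ⟩, hpx⟩ := of_accessible hacc (isOpen_interior.mem_nhds hxQ)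
  obtain ⟨ε, hε, hεU⟩ := Metric.isOpen_iff.1 hU q hq.1
  have hqQ : q ∈ closure (interior Q) :=
    (hQ.closure_interior_eq_closure_of_nonempty_interior ⟨x, hxQ⟩).superset (subset_closure hq.2)
  obtain ⟨w, hwQ, hqw⟩ := Metric.mem_closure_iff.1 hqQ ε hε
  have hwε : w ∈ ball q ε := mem_ball'.2 hqw
  have hwx : ArcTo (U ∩ interior Q) w x :=
    of_isPreconnected (hU.inter isOpen_interior) (isPreconnected_inter_interior hU hQ hUQ)
      (fun hx' => hx ⟨hx'.1, interior_subset hx'.2⟩) ⟨hpU, hpQ⟩ ⟨hεU hwε, hwQ⟩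
      (hpx.mono fun z hz => ⟨hz.1.1, hz.2⟩)
  refine (hwx.mono (inter_subset_inter_right U (subset_insert _ _))).of_segment
    (fun hx' => hx ⟨hx'.1, interior_subset hxQ⟩) (subset_inter
      (((convex_ball q ε).segment_subset (mem_ball_self hε) hwε).trans hεU) fun z hz => ?_)
  rw [← insert_endpoints_openSegment] at hz
  rcases hz with rfl | rfl | hz
  · exact mem_insert _ _
  · exact Or.inr hwQ
  · exact Or.inr (hQ.openSegment_closure_interior_subset_interior (subset_closure hq.2) hwQ hz)

end NormedSpace

end ArcTo

/-! ### Arms and crosscuts made of arcs -/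

namespace IsArm

variable {X : Type*} [TopologicalSpace X] {A B D : Set X} {p q x : X}

lemma trans (hA : IsArm D p q A) (hq : q ∈ D) (hB : IsArm D q x B) : IsArm D p x (A ∪ B) where
  isClosed := hA.isClosed.union hB.isClosed
  isPreconnected := hA.isPreconnected.union q hA.target_mem hB.source_mem hB.isPreconnected
  source_mem := Or.inl hA.source_mem
  target_mem := Or.inr hB.target_mem
  subset := union_subset (hA.subset.trans
    (union_subset subset_union_left (singleton_subset_iff.2 (Or.inl hq)))) hB.subset

lemma image_Icc [T2Space X] {γ : ℝ → X} {l r : ℝ} (hlr : l ≤ r) (hγ : ContinuousOn γ (Icc l r))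
    (hD : ∀ t ∈ Ico l r, γ t ∈ D) : IsArm D (γ l) (γ r) (γ '' Icc l r) where
  isClosed := (isCompact_Icc.image_of_continuousOn hγ).isClosed
  isPreconnected := isPreconnected_Icc.image _ hγ
  source_mem := mem_image_of_mem γ ⟨le_rfl, hlr⟩
  target_mem := mem_image_of_mem γ ⟨hlr, le_rfl⟩
  subset := by
    rintro _ ⟨t, ht, rfl⟩
    exact ht.2.lt_or_eq.imp (fun htr => hD t ⟨ht.1, htr⟩) fun htr => congrArg γ htr

end IsArm

namespace IsArc

variable {X : Type*} [TopologicalSpace X] [T2Space X] {D : Set X} {q x z : X} {α β : ℝ → X}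
  {l r : ℝ}

lemma isArm (h : IsArc D q x l r α) : IsArm D q x (α '' Icc l r) := by
  simpa only [h.left, h.right] using IsArm.image_Icc h.lt.le h.continuousOn h.mem

/-- The arm follows `α` up to the last point of `β` on `α`, and then it follows `β`. -/
lemma exists_isArm_subset_union (hα : IsArc D q x 0 1 α) (hβ : IsArc D q z 0 1 β) (hx : x ∉ D)
    (hz : z ∉ D) (hxz : x ≠ z) : ∃ A leg : Set X, IsArm D q z A ∧ leg ⊆ A ∧
      A ⊆ α '' Icc 0 1 ∪ leg ∧ IsPreconnected leg ∧ z ∈ leg ∧ Disjoint leg (α '' Icc 0 1) := by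
  have hcompact : IsCompact (Icc 0 1 ∩ β ⁻¹' (α '' Icc 0 1)) :=
    isCompact_Icc.of_isClosed_subset (hβ.continuousOn.preimage_isClosed_of_isClosed isClosed_Icc
      hα.isClosed_image) inter_subset_left
  obtain ⟨s, ⟨hs, t, ht, hts⟩, hmax⟩ :=
    hcompact.exists_isGreatest ⟨0, by simp, 0, by simp, by rw [hα.left, hβ.left]⟩
  have hs_lt : s < 1 := hs.2.lt_of_ne fun hs => by
    rw [hs, hβ.right] at hts
    rcases hα.mem_or_eq ht with htD | rfl
    · exact hz (hts ▸ htD)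
    · exact hxz (hα.right.symm.trans hts)
  have ht_lt : t < 1 := ht.2.lt_of_ne fun ht => by
    rw [ht, hα.right] at hts
    exact hx (hts ▸ hβ.mem s ⟨hs.1, hs_lt⟩)
  have hαt : IsArm D q (β s) (α '' Icc 0 t) := by
    simpa only [hα.left, hts] using IsArm.image_Icc ht.1
      (hα.continuousOn.mono (Icc_subset_Icc_right ht.2)) fun u hu =>
        hα.mem u ⟨hu.1, hu.2.trans ht_lt⟩
  have hβs : IsArm D (β s) z (β '' Icc s 1) := by
    simpa only [hβ.right] using IsArm.image_Icc hs.2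
      (hβ.continuousOn.mono (Icc_subset_Icc_left hs.1)) fun u hu => hβ.mem u ⟨hs.1.trans hu.1, hu.2⟩
  refine ⟨_, β '' Ioc s 1, hαt.trans (hβ.mem s ⟨hs.1, hs_lt⟩) hβs,
    (image_mono Ioc_subset_Icc_self).trans subset_union_right, union_subset
      ((image_mono (Icc_subset_Icc_right ht.2)).trans subset_union_left) ?_,
    isPreconnected_Ioc.image _
      (hβ.continuousOn.mono (Ioc_subset_Icc_self.trans (Icc_subset_Icc_left hs.1))),
    ⟨1, ⟨hs_lt, le_rfl⟩, hβ.right⟩, Set.disjoint_left.2 ?_⟩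
  · rw [← Ioc_insert_left hs.2, image_insert_eq, ← hts]
    exact insert_subset (Or.inl (mem_image_of_mem α ht)) subset_union_right
  · rintro _ ⟨u, hu, rfl⟩ huα
    exact (hmax ⟨⟨hs.1.trans hu.1.le, hu.2⟩, huα⟩).not_gt hu.1

end IsArc

lemma SqDecomp.arcTo {D₁ D₂ K : Set (ℝ × ℝ)} {a b e x : ℝ × ℝ} (h : SqDecomp D₁ D₂ K a b)
    (hx : x ∈ K) (hxi : x ∈ interior unitSq) (he : e ∈ D₁) :
    ArcTo (D₁ ∩ insert e (interior unitSq)) e x := by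
  obtain ⟨U, hU, hUD⟩ := h.open₁
  have harc := ArcTo.exists_of_accessible hU convex_unitSq (hUD ▸ h.isPreconnected)
    (hUD ▸ Set.disjoint_right.1 h.disjoint_K hx) hxi (hUD ▸ h.acc₁ x hx) (hUD ▸ he)
  exact harc.mono fun z hz =>
    ⟨hUD ▸ ⟨hz.1, hz.2.elim (fun hze => hze ▸ h.subset_unitSq he) (interior_subset ·)⟩, hz.2⟩

theorem exists_isCrosscut_of_arcTo {D₁ D₂ : Set (ℝ × ℝ)} {e₁ e₂ x : ℝ × ℝ} (hd : Disjoint D₁ D₂)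
    (hxi : x ∈ interior unitSq) (he₁ : e₁ ∈ botEdge) (he₂ : e₂ ∈ topEdge)
    (h₁ : ArcTo (D₁ ∩ insert e₁ (interior unitSq)) e₁ x)
    (h₂ : ArcTo (D₂ ∩ insert e₂ (interior unitSq)) e₂ x) : ∃ φ, IsCrosscut D₁ D₂ x φ := by
  obtain ⟨φ, hφ, hφi, hφ₀, hφ_half, hφ₁, hlow, hup⟩ :=
    h₁.exists_path_through h₂ (hd.mono inter_subset_left inter_subset_left)
  refine ⟨fun t => φ t, continuousOn_iff_continuous_domRestrict.1 hφ, injOn_iff_injective.1 hφi,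
    by simpa [hφ₀], by simpa [hφ₁], hφ_half, fun t ht₀ ht₁ => ?_,
    fun t ht => (hlow t ⟨t.2.1, ht⟩).1, fun t ht => (hup t ⟨ht, t.2.2⟩).1⟩
  rcases lt_trichotomy (t : ℝ) (1 / 2) with ht | ht | ht
  · exact (hlow t ⟨t.2.1, ht⟩).2.resolve_left fun hte =>
      ht₀.ne' (hφi t.2 ⟨le_rfl, zero_le_one⟩ (hte.trans hφ₀.symm))
  · exact mem_of_eq_of_mem ((congrArg φ ht).trans hφ_half) hxi
  · exact (hup t ⟨ht, t.2.2⟩).2.resolve_left fun hte =>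
      ht₁.ne (hφi t.2 ⟨zero_le_one, le_rfl⟩ (hte.trans hφ₁.symm))

/-! ### The order of the cuts -/

lemma Cut.barrier_inter_unitSq_subset {D₁ D₂ : Set (ℝ × ℝ)} {x : ℝ × ℝ} (E : Cut D₁ D₂ x) :
    E.barrier ∩ unitSq ⊆ E.A₁ ∪ E.A₂ := by
  rintro ⟨u, v⟩ ⟨hzE, hzI⟩
  have hv := (mem_unitSq.1 hzI).2
  rcases hzE with (hzF | ⟨rfl, -, hv₀⟩ | hzA) | (hzF | ⟨rfl, hv₁, -⟩ | hzA)
  · exact absurd hzF (Set.disjoint_left.1 disjoint_outerSq_outerFrame (unitSq_subset_outerSq hzI))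
  · obtain rfl : v = 0 := le_antisymm hv₀ hv.1
    exact Or.inl E.isArm₁.source_mem
  · exact Or.inl hzA
  · exact absurd hzF (Set.disjoint_left.1 disjoint_outerSq_outerFrame (unitSq_subset_outerSq hzI))
  · obtain rfl : v = 1 := le_antisymm hv.2 hv₁
    exact Or.inr E.isArm₂.source_mem
  · exact Or.inr hzA

lemma IsArm.disjoint {D₁ D₂ K A B : Set (ℝ × ℝ)} {a b s t x z : ℝ × ℝ}
    (hA : IsArm D₁ s x A) (hB : IsArm D₂ t z B) (h : SqDecomp D₁ D₂ K a b) (hx : x ∈ K)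
    (hz : z ∈ K) (hxz : x ≠ z) : Disjoint A B := by
  refine Disjoint.mono hA.subset hB.subset (disjoint_union_left.2
    ⟨disjoint_union_right.2 ⟨h.disj, disjoint_singleton_right.2 ?_⟩,
      disjoint_union_right.2 ⟨disjoint_singleton_left.2 ?_, disjoint_singleton.2 hxz⟩⟩)
  exacts [Set.disjoint_right.1 h.disjoint_K hz, Set.disjoint_right.1 h.symm.disjoint_K hx]

/-- Some cut at `x` leaves `e` and `y` on the same side. -/
def OnSide (D₁ D₂ : Set (ℝ × ℝ)) (e x y : ℝ × ℝ) : Prop :=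
  ∃ E : Cut D₁ D₂ x, Unseparated E.barrier e y

namespace OnSide

variable {D₁ D₂ K : Set (ℝ × ℝ)} {a b e x y : ℝ × ℝ}

lemma ne (hs : OnSide D₁ D₂ e x y) : y ≠ x := by
  obtain ⟨E, hE⟩ := hs
  rintro rfl
  exact hE.right_notMem E.mem_barrier

lemma ne_left (hs : OnSide D₁ D₂ e x y) : e ≠ x := by
  obtain ⟨E, hE⟩ := hs
  rintro rfl
  exact hE.left_notMem E.mem_barrier

lemma unseparated (hs : OnSide D₁ D₂ e x y) (h : SqDecomp D₁ D₂ K a b) (E : Cut D₁ D₂ x)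
    (hx : x ∈ K) (he : e ∈ K) (hy : y ∈ K) : Unseparated E.barrier e y := by
  obtain ⟨E', hE'⟩ := hs
  exact (E'.unseparated_barrier_iff h E hx he hy).1 hE'

end OnSide

namespace UprightDecomp

variable {D₁ D₂ K : Set (ℝ × ℝ)} {a b e f x y z : ℝ × ℝ}

lemma exists_isArc (h : UprightDecomp D₁ D₂ K a b) (hx : x ∈ K) (hxa : x ≠ a) (hxb : x ≠ b) :
    ∃ α₁ α₂, IsArc D₁ (1 / 2, 0) x 0 1 α₁ ∧ IsArc D₂ (1 / 2, 1) x 0 1 α₂ := by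
  have hxi := ((h.eq_or_eq_or_mem_interior hx).resolve_left hxa).resolve_left hxb
  obtain ⟨α₁, hα₁⟩ := (h.arcTo hx hxi (h.bot (1 / 2) (by norm_num))).mono inter_subset_left
  obtain ⟨α₂, hα₂⟩ := (h.symm.arcTo hx hxi (h.top (1 / 2) (by norm_num))).mono inter_subset_left
  exact ⟨α₁, α₂, hα₁, hα₂⟩

lemma exists_isCrosscut (h : UprightDecomp D₁ D₂ K a b) (hx : x ∈ K) (hxa : x ≠ a) (hxb : x ≠ b) :
    ∃ φ, IsCrosscut D₁ D₂ x φ := by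
  have hxi := ((h.eq_or_eq_or_mem_interior hx).resolve_left hxa).resolve_left hxb
  exact exists_isCrosscut_of_arcTo h.disj hxi (by norm_num [botEdge]) (by norm_num [topEdge])
    (h.arcTo hx hxi (h.bot (1 / 2) (by norm_num)))
    (h.symm.arcTo hx hxi (h.top (1 / 2) (by norm_num)))

-- Each arm of `F` follows the corresponding arm of `E` and leaves it along a leg that ends at `z`.
lemma exists_cut_cut (h : UprightDecomp D₁ D₂ K a b) (hx : x ∈ K) (hxa : x ≠ a) (hxb : x ≠ b)
    (hz : z ∈ K) (hza : z ≠ a) (hzb : z ≠ b) (hxz : x ≠ z) :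
    ∃ (E : Cut D₁ D₂ x) (F : Cut D₁ D₂ z) (L : Set (ℝ × ℝ)), IsPreconnected L ∧ z ∈ L ∧
      Disjoint L E.barrier ∧ F.barrier ⊆ E.barrier ∪ L := by
  obtain ⟨α₁, α₂, hα₁, hα₂⟩ := h.exists_isArc hx hxa hxb
  obtain ⟨β₁, β₂, hβ₁, hβ₂⟩ := h.exists_isArc hz hza hzb
  obtain ⟨B₁, L₁, hB₁, hLB₁, hBL₁, hL₁, hzL₁, hLα₁⟩ := hα₁.exists_isArm_subset_union hβ₁
    (Set.disjoint_right.1 h.disjoint_K hx) (Set.disjoint_right.1 h.disjoint_K hz) hxz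
  obtain ⟨B₂, L₂, hB₂, hLB₂, hBL₂, hL₂, hzL₂, hLα₂⟩ := hα₂.exists_isArm_subset_union hβ₂
    (Set.disjoint_right.1 h.symm.disjoint_K hx) (Set.disjoint_right.1 h.symm.disjoint_K hz) hxz
  have hhalf : (1 / 2 : ℝ) ∈ Ioo (0 : ℝ) 1 := by norm_num
  refine ⟨⟨1 / 2, 1 / 2, hhalf, hhalf, _, _, hα₁.isArm, hα₂.isArm⟩,
    ⟨1 / 2, 1 / 2, hhalf, hhalf, B₁, B₂, hB₁, hB₂⟩, L₁ ∪ L₂, hL₁.union z hzL₁ hzL₂ hL₂,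
    Or.inl hzL₁, Set.disjoint_left.2 fun w hwL hwE => ?_, union_subset ?_ ?_⟩
  · have hwI : w ∈ unitSq := hwL.elim (fun hw => hB₁.subset_unitSq h.toSqDecomp hz (hLB₁ hw))
      fun hw => hB₂.subset_unitSq h.symm hz (hLB₂ hw)
    have h₁₂ := hB₁.disjoint hα₂.isArm h.toSqDecomp hz hx hxz.symm
    have h₂₁ := hB₂.disjoint hα₁.isArm h.symm hz hx hxz.symm
    rcases hwL, Cut.barrier_inter_unitSq_subset _ ⟨hwE, hwI⟩ with ⟨hw | hw, hwα | hwα⟩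
    exacts [Set.disjoint_left.1 hLα₁ hw hwα, Set.disjoint_left.1 h₁₂ (hLB₁ hw) hwα,
      Set.disjoint_left.1 h₂₁ (hLB₂ hw) hwα, Set.disjoint_left.1 hLα₂ hw hwα]
  · rintro w (hw | hw | hw)
    exacts [Or.inl (Or.inl (Or.inl hw)), Or.inl (Or.inl (Or.inr (Or.inl hw))),
      (hBL₁ hw).imp (fun hw => Or.inl (Or.inr (Or.inr hw))) Or.inl]
  · rintro w (hw | hw | hw)
    exacts [Or.inl (Or.inr (Or.inl hw)), Or.inl (Or.inr (Or.inr (Or.inl hw))),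
      (hBL₂ hw).imp (fun hw => Or.inr (Or.inr (Or.inr hw))) Or.inr]

/- The side of `e` at `x`, together with `x`, is connected. It misses every barrier at `z` made from
a barrier at `x` and legs on the side of `f`. -/
theorem onSide_of_onSide (h : UprightDecomp D₁ D₂ K a b) (hx : x ∈ K) (hxa : x ≠ a) (hxb : x ≠ b)
    (hz : z ∈ K) (hza : z ≠ a) (hzb : z ≠ b) (he : e ∈ K) (hf : f ∈ K) (hex : e ≠ x)
    (hef : ¬ OnSide D₁ D₂ e x f) (hfz : OnSide D₁ D₂ f x z) (hy : y ∈ K)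
    (hxy : y = x ∨ OnSide D₁ D₂ e x y) : OnSide D₁ D₂ e z y := by
  obtain ⟨E, F, L, hL, hzL, hLE, hFEL⟩ := h.exists_cut_cut hx hxa hxb hz hza hzb hfz.ne.symm
  have hef' : ¬ Unseparated E.barrier e f := fun hef' => hef ⟨E, hef'⟩
  have hconn : IsPreconnected (insert x {w | Unseparated E.barrier e w}) :=
    (isPreconnected_connectedComponentIn (F := E.barrierᶜ) (x := e)).subset_closure
      (subset_insert x _) (insert_subset
        (E.mem_closure_setOf_unseparated h.toSqDecomp hx he hf hex hfz.ne_left hef')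
        subset_closure)
  have hdisj : Disjoint (insert x {w | Unseparated E.barrier e w}) F.barrier := by
    refine Set.disjoint_left.2 fun w hw hwF => ?_
    rcases hw with rfl | hw
    · exact hfz.ne (F.eq_of_mem_barrier h.toSqDecomp hx hwF).symm
    rcases hFEL hwF with hwE | hwL
    · exact hw.right_notMem hwE
    · exact hef' (hw.trans ((Unseparated.of_isPreconnected hL hLE hwL hzL).trans
        (hfz.unseparated h.toSqDecomp E hx hf hz).symm))
  exact ⟨F, .of_isPreconnected hconn hdisj
    (Or.inr (.refl fun heE => hex (E.eq_of_mem_barrier h.toSqDecomp he heE)))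
    (hxy.imp id fun hxy => hxy.unseparated h.toSqDecomp E hx he hy)⟩

end UprightDecomp

/-! ### Small intervals in compact ordered spaces -/

theorem exists_rel_diam_lt {X : Type*} [PseudoMetricSpace X] [CompactSpace X] {r : X → X → Prop}
    [IsTrans X r] [Std.Trichotomous r] (hleft : ∀ z, IsOpen {y | r y z})
    (hright : ∀ y, IsOpen {z | r y z}) {x : X} (hx : x ∈ closure {y | r x y}) {ε : ℝ}
    (hε : 0 < ε) : ∃ y, r x y ∧ diam {z | ¬ r z x ∧ ¬ r y z} < ε := by
  obtain ⟨y₀, hy₀⟩ := closure_nonempty_iff.1 ⟨x, hx⟩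
  have : Nonempty {y // r x y} := ⟨⟨y₀, hy₀⟩⟩
  have hfar : IsCompact ((ball x (ε / 3) ∪ {z | r z x})ᶜ) :=
    (isOpen_ball.union (hleft x)).isClosed_compl.isCompact
  have hcover : (ball x (ε / 3) ∪ {z | r z x})ᶜ ⊆ ⋃ y : {y // r x y}, {z | r y z} := fun z hz => by
    have hxz : r x z := by
      by_contra hxz
      exact hz (Or.inl (Std.Trichotomous.trichotomous x z hxz (fun hzx => hz (Or.inr hzx)) ▸
        mem_ball_self (by positivity)))
    obtain ⟨y, hyz, hxy⟩ := _root_.mem_closure_iff.1 hx _ (hleft z) hxz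
    exact mem_iUnion.2 ⟨⟨y, hxy⟩, hyz⟩
  have hdir : Directed (· ⊆ ·) fun y : {y // r x y} => {z | r y z} := fun y y' => by
    by_cases hyy : r y y'
    · exact ⟨y, subset_rfl, fun z hz => _root_.trans hyy hz⟩
    by_cases hyy' : r y' y
    · exact ⟨y', fun z hz => _root_.trans hyy' hz, subset_rfl⟩
    · obtain rfl := Subtype.ext (Std.Trichotomous.trichotomous y.1 y'.1 hyy hyy')
      exact ⟨y, subset_rfl, subset_rfl⟩
  obtain ⟨⟨y, hxy⟩, hy⟩ := hfar.elim_directed_cover _ (fun y : {y // r x y} => hright y) hcover hdir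
  have hball : {z | ¬ r z x ∧ ¬ r y z} ⊆ ball x (ε / 3) := fun z hz =>
    by_contra fun hzb => hz.2 (hy fun hz' => hz'.elim hzb hz.1)
  refine ⟨y, hxy, (diam_mono hball isBounded_ball).trans_lt ?_⟩
  linarith [diam_ball (x := x) (show 0 ≤ ε / 3 by positivity)]

lemma image_val_setOf {X : Type*} {s : Set X} {p : X → Prop} :
    ((↑) : s → X) '' {x | p x} = {x ∈ s | p x} :=
  Subtype.image_preimage_val s {x | p x}

theorem exists_mem_rel_diam_lt {X : Type*} [PseudoMetricSpace X] {s : Set X} (hs : IsCompact s)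
    {r : X → X → Prop} [IsTrans s fun y z => r y z] [Std.Trichotomous fun y z : s => r y z]
    (hleft : ∀ z ∈ s, IsOpen {y : s | r y z}) (hright : ∀ y ∈ s, IsOpen {z : s | r y z}) {x : X}
    (hxs : x ∈ s) (hx : x ∈ closure {y ∈ s | r x y}) {ε : ℝ} (hε : 0 < ε) :
    ∃ y ∈ s, r x y ∧ diam {z ∈ s | ¬ r z x ∧ ¬ r y z} < ε := by
  have := isCompact_iff_compactSpace.1 hs
  rw [← image_val_setOf] at hx
  obtain ⟨y, hxy, hdiam⟩ := exists_rel_diam_lt (r := fun y z : s => r y z)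
    (fun z => hleft z z.2) (fun y => hright y y.2) (closure_subtype (x := ⟨x, hxs⟩).2 hx) hε
  rw [← isometry_subtype_coe.diam_image,
    image_val_setOf (p := fun z => ¬ r z x ∧ ¬ r y z)] at hdiam
  exact ⟨y, y.2, hxy, hdiam⟩

/-! ### The linear order of `K` -/

namespace SqDecomp

variable {D₁ D₂ K : Set (ℝ × ℝ)} {a b e : ℝ × ℝ}

lemma mem_closure_sdiff_singleton (h : SqDecomp D₁ D₂ K a b) (he : e ∈ K)
    (hei : e ∉ interior unitSq) : e ∈ closure (K \ {e}) := by
  by_contra hcl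
  obtain ⟨ε, hε, hball⟩ := Metric.mem_nhds_iff.1 (isClosed_closure.isOpen_compl.mem_nhds hcl)
  have hint : unitSq ⊆ closure (interior unitSq) :=
    subset_closure.trans (convex_unitSq.closure_interior_eq_closure_of_nonempty_interior
      (interior_unitSq ▸ ⟨(1 / 2, 1 / 2), by norm_num⟩)).superset
  have hS : IsPreconnected ((ball e ε ∩ unitSq) \ {e}) :=
    ((convex_ball e ε).inter convex_unitSq.interior).isPreconnected.subset_closure
      (fun z hz => ⟨⟨hz.1, interior_subset hz.2⟩, fun hze => hei (hze ▸ hz.2)⟩)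
      (fun z hz => isOpen_ball.inter_closure ⟨hz.1.1, hint hz.1.2⟩)
  have hSK : Disjoint ((ball e ε ∩ unitSq) \ {e}) K :=
    Set.disjoint_left.2 fun z hz hzK => hball hz.1.1 (subset_closure ⟨hzK, hz.2⟩)
  have hmeets : ∀ {D : Set (ℝ × ℝ)}, D ⊆ unitSq → K ⊆ closure D → Disjoint D K →
      ∃ z ∈ D, z ∈ (ball e ε ∩ unitSq) \ {e} := fun hD hKD hDK => by
    obtain ⟨z, hz, hzD⟩ := _root_.mem_closure_iff.1 (hKD he) _ isOpen_ball (mem_ball_self hε)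
    exact ⟨z, hzD, ⟨hz, hD hzD⟩, fun hze => Set.disjoint_left.1 hDK hzD (hze ▸ he)⟩
  rcases h.subset_or_subset hS (fun z hz => hz.1.2) hSK with hS₁ | hS₂
  · obtain ⟨z, hz, hzS⟩ := hmeets h.symm.subset_unitSq h.symm.K_subset_closure h.symm.disjoint_K
    exact Set.disjoint_left.1 h.disj (hS₁ hzS) hz
  · obtain ⟨z, hz, hzS⟩ := hmeets h.subset_unitSq h.K_subset_closure h.disjoint_K
    exact Set.disjoint_left.1 h.disj hz (hS₂ hzS)

lemma isCompact_K (h : SqDecomp D₁ D₂ K a b) : IsCompact K :=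
  isCompact_Icc.of_isClosed_subset h.isClosed_K h.K_subset_unitSq

lemma a_mem_closure (h : SqDecomp D₁ D₂ K a b) : a ∈ closure (K \ {a}) :=
  h.mem_closure_sdiff_singleton h.a_mem fun hai => by
    rw [interior_unitSq] at hai
    exact hai.1.1.ne' h.ha.1

lemma b_mem_closure (h : SqDecomp D₁ D₂ K a b) : b ∈ closure (K \ {b}) :=
  h.mem_closure_sdiff_singleton h.b_mem fun hbi => by
    rw [interior_unitSq] at hbi
    exact hbi.1.2.ne h.hb.1

lemma exists_mem_ne_ne (h : SqDecomp D₁ D₂ K a b) : ∃ z ∈ K, z ≠ a ∧ z ≠ b := by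
  obtain ⟨z, hzb, hzK, hza⟩ :=
    _root_.mem_closure_iff.1 h.a_mem_closure _ isOpen_compl_singleton h.ne
  exact ⟨z, hzK, hza, hzb⟩

end SqDecomp

/-- The strict order of `K` from `a` to `b`: a cut at `x` leaves `y` on the side of `a`. As there
need not be a cut at `b`, the definition makes `b` the largest element. -/
def CutLt (D₁ D₂ : Set (ℝ × ℝ)) (a b y x : ℝ × ℝ) : Prop :=
  y ≠ x ∧ (x = b ∨ OnSide D₁ D₂ a x y)

lemma OnSide.symm {D₁ D₂ : Set (ℝ × ℝ)} {e x y : ℝ × ℝ} (hs : OnSide D₁ D₂ e x y) :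
    OnSide D₁ D₂ y x e :=
  hs.imp fun _ hE => hE.symm

lemma SqDecomp.not_onSide {D₁ D₂ K : Set (ℝ × ℝ)} {a b x : ℝ × ℝ} (h : SqDecomp D₁ D₂ K a b)
    (hx : x ∈ K) : ¬ OnSide D₁ D₂ a x b :=
  fun ⟨E, hE⟩ => E.not_unseparated h hx hE

namespace UprightDecomp

variable {D₁ D₂ K : Set (ℝ × ℝ)} {a b e x y z : ℝ × ℝ}

lemma nonempty_cut (h : UprightDecomp D₁ D₂ K a b) (hx : x ∈ K) (hxa : x ≠ a) (hxb : x ≠ b) :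
    Nonempty (Cut D₁ D₂ x) := by
  obtain ⟨α₁, α₂, hα₁, hα₂⟩ := h.exists_isArc hx hxa hxb
  have hhalf : (1 / 2 : ℝ) ∈ Ioo (0 : ℝ) 1 := by norm_num
  exact ⟨⟨1 / 2, 1 / 2, hhalf, hhalf, _, _, hα₁.isArm, hα₂.isArm⟩⟩

lemma onSide_self (h : UprightDecomp D₁ D₂ K a b) (hx : x ∈ K) (hxa : x ≠ a) (hxb : x ≠ b)
    (he : e ∈ K) (hex : e ≠ x) : OnSide D₁ D₂ e x e := by
  obtain ⟨E⟩ := h.nonempty_cut hx hxa hxb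
  exact ⟨E, .refl fun heE => hex (E.eq_of_mem_barrier h.toSqDecomp he heE)⟩

lemma onSide_or_onSide (h : UprightDecomp D₁ D₂ K a b) (hx : x ∈ K) (hxa : x ≠ a) (hxb : x ≠ b)
    (hy : y ∈ K) (hyx : y ≠ x) : OnSide D₁ D₂ a x y ∨ OnSide D₁ D₂ b x y := by
  obtain ⟨E⟩ := h.nonempty_cut hx hxa hxb
  exact (E.unseparated_or_unseparated h.toSqDecomp hx hxa hxb hy hyx).imp
    (fun hya => ⟨E, hya.symm⟩) fun hyb => ⟨E, hyb.symm⟩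

theorem onSide_comm (h : UprightDecomp D₁ D₂ K a b) (hx : x ∈ K) (hxa : x ≠ a) (hxb : x ≠ b)
    (hz : z ∈ K) (hza : z ≠ a) (hzb : z ≠ b) : OnSide D₁ D₂ a x z ↔ OnSide D₁ D₂ b z x :=
  ⟨fun haz => h.onSide_of_onSide hx hxa hxb hz hza hzb h.b_mem h.a_mem hxb.symm
    (fun hba => h.not_onSide hx hba.symm) haz hx (Or.inl rfl),
  fun hbx => h.onSide_of_onSide hz hza hzb hx hxa hxb h.a_mem h.b_mem hza.symm
    (h.not_onSide hz) hbx hz (Or.inl rfl)⟩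

end UprightDecomp

namespace CutLt

variable {D₁ D₂ K : Set (ℝ × ℝ)} {a b x y z : ℝ × ℝ}

lemma iff_onSide_left (hxb : x ≠ b) : CutLt D₁ D₂ a b y x ↔ OnSide D₁ D₂ a x y :=
  ⟨fun hyx => hyx.2.resolve_left hxb, fun hyx => ⟨hyx.ne, Or.inr hyx⟩⟩

lemma ne_right (hyx : CutLt D₁ D₂ a b y x) (h : SqDecomp D₁ D₂ K a b) (hx : x ∈ K) : y ≠ b := by
  rintro rfl
  exact hyx.2.elim hyx.1.symm (h.not_onSide hx)

lemma ne_left (hyx : CutLt D₁ D₂ a b y x) (hab : a ≠ b) : x ≠ a := by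
  rintro rfl
  exact hyx.2.elim hab fun hs => hs.ne_left rfl

lemma left_iff (h : UprightDecomp D₁ D₂ K a b) (hx : x ∈ K) : CutLt D₁ D₂ a b a x ↔ x ≠ a := by
  refine ⟨fun hax => hax.1.symm, fun hxa => ⟨hxa.symm, ?_⟩⟩
  exact or_iff_not_imp_left.2 fun hxb => h.onSide_self hx hxa hxb h.a_mem hxa.symm

lemma right_iff : CutLt D₁ D₂ a b y b ↔ y ≠ b := ⟨And.left, fun hyb => ⟨hyb, Or.inl rfl⟩⟩

lemma iff_onSide_right (h : UprightDecomp D₁ D₂ K a b) (hy : y ∈ K) (hya : y ≠ a) (hyb : y ≠ b)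
    (hx : x ∈ K) : CutLt D₁ D₂ a b y x ↔ OnSide D₁ D₂ b y x := by
  rcases eq_or_ne x b with rfl | hxb
  · exact right_iff.trans (iff_of_true hyb (h.onSide_self hy hya hyb hx hyb.symm))
  rcases eq_or_ne x a with rfl | hxa
  · exact iff_of_false (fun hyx => hyx.ne_left h.ne rfl) fun hbx => h.not_onSide hy hbx.symm
  · rw [iff_onSide_left hxb, h.onSide_comm hx hxa hxb hy hya hyb]

theorem trans (hzy : CutLt D₁ D₂ a b z y) (hyx : CutLt D₁ D₂ a b y x)
    (h : UprightDecomp D₁ D₂ K a b) (hx : x ∈ K) (hy : y ∈ K) (hz : z ∈ K) :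
    CutLt D₁ D₂ a b z x := by
  have hya := hzy.ne_left h.ne
  have hyb := hyx.ne_right h.toSqDecomp hx
  rcases eq_or_ne x b with rfl | hxb
  · exact right_iff.2 (hzy.ne_right h.toSqDecomp hy)
  exact (iff_onSide_left hxb).2 <| h.onSide_of_onSide hy hya hyb hx (hyx.ne_left h.ne) hxb h.a_mem
    h.b_mem hya.symm (h.not_onSide hy) ((iff_onSide_right h hy hya hyb hx).1 hyx) hz
    (Or.inr ((iff_onSide_left hyb).1 hzy))

theorem trichotomous (h : UprightDecomp D₁ D₂ K a b) (hx : x ∈ K) (hy : y ∈ K) (hne : y ≠ x) :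
    CutLt D₁ D₂ a b y x ∨ CutLt D₁ D₂ a b x y := by
  rcases eq_or_ne x a with rfl | hxa
  · exact Or.inr ((left_iff h hy).2 hne)
  rcases eq_or_ne x b with rfl | hxb
  · exact Or.inl (right_iff.2 hne)
  rw [iff_onSide_left hxb, iff_onSide_right h hx hxa hxb hy]
  exact h.onSide_or_onSide hx hxa hxb hy hne

end CutLt

namespace UprightDecomp

variable {D₁ D₂ K : Set (ℝ × ℝ)} {a b e x : ℝ × ℝ}

lemma isOpen_setOf_onSide (h : UprightDecomp D₁ D₂ K a b) (hx : x ∈ K) (hxa : x ≠ a)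
    (hxb : x ≠ b) (he : e ∈ K) : IsOpen {y : K | OnSide D₁ D₂ e x y} := by
  obtain ⟨E⟩ := h.nonempty_cut hx hxa hxb
  convert (Unseparated.isOpen_setOf (p := e) E.isClosed_barrier).preimage
    (continuous_subtype_val (p := (· ∈ K))) using 1
  exact Set.ext fun y => ⟨fun hy => hy.unseparated h.toSqDecomp E hx he y.2, fun hy => ⟨E, hy⟩⟩

lemma mem_closure_setOf_onSide_left (h : UprightDecomp D₁ D₂ K a b) (hx : x ∈ K) (hxa : x ≠ a)
    (hxb : x ≠ b) : x ∈ closure {y | y ∈ K ∧ OnSide D₁ D₂ a x y} := by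
  obtain ⟨E⟩ := h.nonempty_cut hx hxa hxb
  exact closure_mono (fun _ hy => And.imp_right (Exists.intro E) hy)
    (E.mem_closure_left h hx hxa hxb)

lemma mem_closure_setOf_onSide_right (h : UprightDecomp D₁ D₂ K a b) (hx : x ∈ K) (hxa : x ≠ a)
    (hxb : x ≠ b) : x ∈ closure {y | y ∈ K ∧ OnSide D₁ D₂ b x y} := by
  obtain ⟨E⟩ := h.nonempty_cut hx hxa hxb
  exact closure_mono (fun _ hy => And.imp_right (Exists.intro E) hy)
    (E.mem_closure_right h hx hxa hxb)

lemma isOpen_setOf_cutLt_left (h : UprightDecomp D₁ D₂ K a b) (hx : x ∈ K) :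
    IsOpen {y : K | CutLt D₁ D₂ a b y x} := by
  rcases eq_or_ne x b with rfl | hxb
  · simp only [CutLt.right_iff]
    exact isOpen_compl_singleton.preimage continuous_subtype_val
  rcases eq_or_ne x a with rfl | hxa
  · convert isOpen_empty
    exact eq_empty_of_forall_notMem fun y hy => hy.ne_left h.ne rfl
  · simpa only [CutLt.iff_onSide_left hxb] using h.isOpen_setOf_onSide hx hxa hxb h.a_mem

lemma isOpen_setOf_cutLt_right (h : UprightDecomp D₁ D₂ K a b) (hx : x ∈ K) :
    IsOpen {y : K | CutLt D₁ D₂ a b x y} := by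
  rcases eq_or_ne x a with rfl | hxa
  · simp only [CutLt.left_iff h (Subtype.coe_prop _)]
    exact isOpen_compl_singleton.preimage continuous_subtype_val
  rcases eq_or_ne x b with rfl | hxb
  · convert isOpen_empty
    exact eq_empty_of_forall_notMem fun y hy => hy.ne_right h.toSqDecomp y.2 rfl
  · simpa only [CutLt.iff_onSide_right h hx hxa hxb (Subtype.coe_prop _)] using
      h.isOpen_setOf_onSide hx hxa hxb h.b_mem

lemma mem_closure_setOf_cutLt_left (h : UprightDecomp D₁ D₂ K a b) (hx : x ∈ K) (hxa : x ≠ a) :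
    x ∈ closure {y | y ∈ K ∧ CutLt D₁ D₂ a b y x} := by
  rcases eq_or_ne x b with rfl | hxb
  · simp only [CutLt.right_iff]
    exact h.b_mem_closure
  · simpa only [CutLt.iff_onSide_left hxb] using h.mem_closure_setOf_onSide_left hx hxa hxb

lemma mem_closure_setOf_cutLt_right (h : UprightDecomp D₁ D₂ K a b) (hx : x ∈ K) (hxb : x ≠ b) :
    x ∈ closure {y | y ∈ K ∧ CutLt D₁ D₂ a b x y} := by
  rcases eq_or_ne x a with rfl | hxa
  · exact mem_of_subset_of_mem (closure_mono fun y hy => ⟨hy.1, (CutLt.left_iff h hy.1).2 hy.2⟩)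
      h.a_mem_closure
  · exact mem_of_subset_of_mem (closure_mono fun y hy =>
      ⟨hy.1, (CutLt.iff_onSide_right h hx hxa hxb hy.1).2 hy.2⟩)
      (h.mem_closure_setOf_onSide_right hx hxa hxb)

lemma isStrictTotalOrder (h : UprightDecomp D₁ D₂ K a b) :
    IsStrictTotalOrder K fun y x : K => CutLt D₁ D₂ a b y x where
  irrefl _ hx := hx.1 rfl
  trans z y x hzy hyx := hzy.trans hyx h x.2 y.2 z.2
  trichotomous y x hyx hxy := Subtype.ext <| by_contra fun hne =>
    (CutLt.trichotomous h x.2 y.2 hne).elim hyx hxy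

theorem exists_cutLt_right (h : UprightDecomp D₁ D₂ K a b) (hx : x ∈ K) (hxb : x ≠ b) {ε : ℝ}
    (hε : 0 < ε) : ∃ y ∈ K, CutLt D₁ D₂ a b x y ∧
      diam {z ∈ K | ¬ CutLt D₁ D₂ a b z x ∧ ¬ CutLt D₁ D₂ a b y z} < ε :=
  have := h.isStrictTotalOrder
  exists_mem_rel_diam_lt h.isCompact_K (r := fun y x => CutLt D₁ D₂ a b y x)
    (fun _ hz => h.isOpen_setOf_cutLt_left hz) (fun _ hy => h.isOpen_setOf_cutLt_right hy) hx
    (h.mem_closure_setOf_cutLt_right hx hxb) hε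

theorem exists_cutLt_left (h : UprightDecomp D₁ D₂ K a b) (hx : x ∈ K) (hxa : x ≠ a) {ε : ℝ}
    (hε : 0 < ε) : ∃ y ∈ K, CutLt D₁ D₂ a b y x ∧
      diam {z ∈ K | ¬ CutLt D₁ D₂ a b z y ∧ ¬ CutLt D₁ D₂ a b x z} < ε := by
  have := h.isStrictTotalOrder
  have : IsStrictTotalOrder K (Function.swap fun y x : K => CutLt D₁ D₂ a b y x) := inferInstance
  simp only [and_comm (b := ¬ CutLt D₁ D₂ a b x _)]
  exact exists_mem_rel_diam_lt h.isCompact_K (r := fun x y => CutLt D₁ D₂ a b y x)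
    (fun _ hz => h.isOpen_setOf_cutLt_right hz) (fun _ hy => h.isOpen_setOf_cutLt_left hy) hx
    (h.mem_closure_setOf_cutLt_left hx hxa) hε

end UprightDecomp

/-! ### Crosscuts and the order of `K` -/

namespace IsCrosscut

variable {D₁ D₂ : Set (ℝ × ℝ)} {a x y z : ℝ × ℝ} {φ : unitInterval → ℝ × ℝ}

/-- The cut whose arms are the two halves of a crosscut. -/
def cut (hφ : IsCrosscut D₁ D₂ x φ) : Cut D₁ D₂ x where
  c₁ := (φ 0).1
  c₂ := (φ 1).1
  c₁_mem := hφ.2.2.1.1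
  c₂_mem := hφ.2.2.2.1.1
  A₁ := φ '' Icc 0 half
  A₂ := φ '' Icc half 1
  isArm₁ := by
    obtain ⟨hc, -, h₀, -, hx, -, hD, -⟩ := hφ
    refine ⟨(isCompact_Icc.image hc).isClosed, isPreconnected_Icc.image _ hc.continuousOn,
      ⟨0, ⟨le_rfl, half.2.1⟩, Prod.ext rfl h₀.2⟩, ⟨half, ⟨half.2.1, le_rfl⟩, hx⟩, ?_⟩
    rintro _ ⟨t, ht, rfl⟩
    exact ht.2.lt_or_eq.imp (hD t) fun (ht : t = half) => (congrArg φ ht).trans hx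
  isArm₂ := by
    obtain ⟨hc, -, -, h₁, hx, -, -, hD⟩ := hφ
    refine ⟨(isCompact_Icc.image hc).isClosed, isPreconnected_Icc.image _ hc.continuousOn,
      ⟨1, ⟨half.2.2, le_rfl⟩, Prod.ext rfl h₁.2⟩, ⟨half, ⟨le_rfl, half.2.2⟩, hx⟩, ?_⟩
    rintro _ ⟨t, ht, rfl⟩
    exact ht.1.lt_or_eq.imp (hD t) fun (ht : half = t) => (congrArg φ ht.symm).trans hx

lemma apply_eq_or_mem_interior (hφ : IsCrosscut D₁ D₂ x φ) (t : unitInterval) :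
    φ t = φ 0 ∨ φ t = φ 1 ∨ φ t ∈ interior unitSq := by
  rcases t.2.1.eq_or_lt with ht₀ | ht₀
  · exact Or.inl (congrArg φ (Subtype.ext ht₀.symm))
  rcases t.2.2.eq_or_lt with ht₁ | ht₁
  · exact Or.inr (Or.inl (congrArg φ (Subtype.ext ht₁)))
  · exact Or.inr (Or.inr (hφ.2.2.2.2.2.1 t ht₀ ht₁))

lemma leftEdge_subset (hφ : IsCrosscut D₁ D₂ x φ) : leftEdge ⊆ unitSq \ range φ := by
  rintro z ⟨hz₁, hz₂⟩
  refine ⟨mem_unitSq.2 ⟨by simp [hz₁], Ioo_subset_Icc_self hz₂⟩, ?_⟩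
  rintro ⟨t, rfl⟩
  rcases hφ.apply_eq_or_mem_interior t with ht | ht | ht
  · exact hφ.cut.c₁_mem.1.ne' ((congrArg Prod.fst ht).symm.trans hz₁)
  · exact hφ.cut.c₂_mem.1.ne' ((congrArg Prod.fst ht).symm.trans hz₁)
  · rw [interior_unitSq] at ht
    exact ht.1.1.ne' hz₁

lemma leftEdge_subset_connectedComponentIn (hφ : IsCrosscut D₁ D₂ x φ) :
    leftEdge ⊆ connectedComponentIn (unitSq \ range φ) (0, 1 / 2) :=
  have hpre : IsPreconnected leftEdge :=
    (isPreconnected_singleton (x := (0 : ℝ))).prod (isPreconnected_Ioo (a := (0 : ℝ)) (b := 1))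
  hpre.subset_connectedComponentIn ⟨rfl, by norm_num⟩ hφ.leftEdge_subset

lemma barrier_inter_unitSq_subset (hφ : IsCrosscut D₁ D₂ x φ) :
    hφ.cut.barrier ∩ unitSq ⊆ range φ :=
  hφ.cut.barrier_inter_unitSq_subset.trans
    (union_subset (image_subset_range _ _) (image_subset_range _ _))

lemma mem_barrier_of_clampSq_mem_range (hφ : IsCrosscut D₁ D₂ x φ) (hz : z ∈ outerSq)
    (hzφ : clampSq z ∈ range φ) : z ∈ hφ.cut.barrier := by
  obtain ⟨t, ht⟩ := hzφ
  rcases hφ.apply_eq_or_mem_interior t with ht' | ht' | ht'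
  · have hz₀ : clampSq z = φ 0 := ht.symm.trans ht'
    obtain ⟨h₁, h₂⟩ : clampSq z ∈ botEdge := hz₀ ▸ hφ.2.2.1
    exact Or.inl (Or.inr (Or.inl ⟨(coe_projIcc_eq_self zero_le_one h₁).symm.trans
      (congrArg Prod.fst hz₀), hz.2.1.le, (projIcc_eq_left zero_lt_one).1 (Subtype.ext h₂)⟩))
  · have hz₁ : clampSq z = φ 1 := ht.symm.trans ht'
    obtain ⟨h₁, h₂⟩ : clampSq z ∈ topEdge := hz₁ ▸ hφ.2.2.2.1
    exact Or.inr (Or.inr (Or.inl ⟨(coe_projIcc_eq_self zero_le_one h₁).symm.trans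
      (congrArg Prod.fst hz₁), (projIcc_eq_right zero_lt_one).1 (Subtype.ext h₂), hz.2.2.le⟩))
  · rw [ht] at ht'
    rw [clampSq_of_mem (mem_unitSq_of_clampSq_mem_interior ht')] at ht
    rcases le_total t half with hle | hle
    · exact Or.inl (Or.inr (Or.inr ⟨t, ⟨t.2.1, hle⟩, ht⟩))
    · exact Or.inr (Or.inr (Or.inr ⟨t, ⟨hle, t.2.2⟩, ht⟩))

lemma unseparated_of_mem_H₁ (hφ : IsCrosscut D₁ D₂ x φ) (ha : a ∈ leftEdge) (hy : y ∈ H₁ φ)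
    (hyφ : y ∉ range φ) : Unseparated hφ.cut.barrier a y := by
  set C := connectedComponentIn (unitSq \ range φ) (0, 1 / 2)
  have hC : C ⊆ unitSq \ range φ := connectedComponentIn_subset _ _
  have hyI : y ∈ unitSq := closure_minimal (hC.trans sdiff_subset) isClosed_unitSq hy
  refine .of_isPreconnected (isPreconnected_connectedComponentIn.subset_closure (subset_insert y C)
    (insert_subset hy subset_closure)) (Set.disjoint_left.2 fun z hz hzE => ?_)
    (mem_insert_of_mem y (hφ.leftEdge_subset_connectedComponentIn ha)) (mem_insert y C)
  obtain ⟨hzI, hzφ⟩ : z ∈ unitSq \ range φ :=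
    insert_subset (show y ∈ unitSq \ range φ from ⟨hyI, hyφ⟩) hC hz
  exact hzφ (hφ.barrier_inter_unitSq_subset ⟨hzE, hzI⟩)

-- The retraction onto the square carries the side of `a` into the component of the left edge.
lemma mem_H₁_of_unseparated (hφ : IsCrosscut D₁ D₂ x φ) (ha : a ∈ leftEdge) (hy : y ∈ unitSq)
    (hu : Unseparated hφ.cut.barrier a y) : y ∈ H₁ φ := by
  have haI := (hφ.leftEdge_subset ha).1
  have hside : clampSq '' connectedComponentIn hφ.cut.barrierᶜ a ⊆ unitSq \ range φ := by
    rintro _ ⟨z, hz, rfl⟩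
    have haz : Unseparated hφ.cut.barrier a z := hz
    exact ⟨clampSq_mem_unitSq z, fun hzφ => haz.right_notMem <|
      hφ.mem_barrier_of_clampSq_mem_range
        (haz.mem_outerSq hφ.cut.frame_subset_barrier (unitSq_subset_outerSq haI)) hzφ⟩
  refine subset_closure ?_
  rw [connectedComponentIn_eq (hφ.leftEdge_subset_connectedComponentIn ha)]
  exact (isPreconnected_connectedComponentIn.image _
    continuous_clampSq.continuousOn).subset_connectedComponentIn
    ⟨a, mem_connectedComponentIn hu.left_notMem, clampSq_of_mem haI⟩ hside
    ⟨y, hu, clampSq_of_mem hy⟩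

lemma range_subset (hφ : IsCrosscut D₁ D₂ x φ) : range φ ⊆ D₁ ∪ D₂ ∪ {x} := by
  rintro _ ⟨t, rfl⟩
  obtain ⟨-, -, -, -, hx, -, hD₁, hD₂⟩ := hφ
  rcases lt_trichotomy t half with ht | rfl | ht
  exacts [Or.inl (Or.inl (hD₁ t ht)), Or.inr hx, Or.inl (Or.inr (hD₂ t ht))]

lemma cutLt_of_mem_H₁ {K : Set (ℝ × ℝ)} {b : ℝ × ℝ} (hφ : IsCrosscut D₁ D₂ x φ)
    (h : SqDecomp D₁ D₂ K a b) (hyK : y ∈ K) (hyx : y ≠ x) (hy : y ∈ H₁ φ) :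
    CutLt D₁ D₂ a b y x := by
  refine ⟨hyx, Or.inr ⟨hφ.cut, hφ.unseparated_of_mem_H₁ h.ha hy fun hyφ => ?_⟩⟩
  rcases hφ.range_subset hyφ with (hyD | hyD) | hyx'
  exacts [Set.disjoint_left.1 h.disjoint_K hyD hyK, Set.disjoint_left.1 h.symm.disjoint_K hyD hyK,
    hyx hyx']

end IsCrosscut

namespace UprightDecomp

variable {D₁ D₂ K : Set (ℝ × ℝ)} {a b x y : ℝ × ℝ} {φ : unitInterval → ℝ × ℝ}

lemma mem_H₁_of_not_cutLt (h : UprightDecomp D₁ D₂ K a b) (hφ : IsCrosscut D₁ D₂ x φ) (hx : x ∈ K)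
    (hxa : x ≠ a) (hxb : x ≠ b) (hy : y ∈ K) (hxy : ¬ CutLt D₁ D₂ a b x y) : y ∈ H₁ φ := by
  have hlt : ∀ z ∈ K, CutLt D₁ D₂ a b z x → z ∈ H₁ φ := fun z hz hzx =>
    hφ.mem_H₁_of_unseparated h.ha (h.K_subset_unitSq hz)
      (((CutLt.iff_onSide_left hxb).1 hzx).unseparated h.toSqDecomp hφ.cut hx h.a_mem hz)
  rcases eq_or_ne y x with rfl | hyx
  · exact closure_minimal (fun z hz => hlt z hz.1 hz.2) isClosed_closure
      (h.mem_closure_setOf_cutLt_left hy hxa)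
  · exact hlt y hy ((CutLt.trichotomous h hx hy hyx).resolve_right hxy)

theorem kle_iff (h : UprightDecomp D₁ D₂ K a b) (hx : x ∈ K) (hy : y ∈ K) :
    kle D₁ D₂ a b y x ↔ ¬ CutLt D₁ D₂ a b x y := by
  refine ⟨?_, fun hxy => ?_⟩
  · rintro (rfl | rfl | ⟨φ, hφ, hyφ⟩) hxy
    · exact hxy.ne_left h.ne rfl
    · exact hxy.ne_right h.toSqDecomp hy rfl
    · exact (hxy.trans (hφ.cutLt_of_mem_H₁ h.toSqDecomp hy hxy.1.symm hyφ) h hx hy hx).1 rfl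
  · refine or_iff_not_imp_left.2 fun hya => or_iff_not_imp_left.2 fun hxb => ?_
    have hxa : x ≠ a := fun hxa => hxy (hxa ▸ (CutLt.left_iff h hy).2 hya)
    obtain ⟨φ, hφ⟩ := h.exists_isCrosscut hx hxa hxb
    exact ⟨φ, hφ, h.mem_H₁_of_not_cutLt hφ hx hxa hxb hy hxy⟩

lemma setOf_kle_kle_eq (h : UprightDecomp D₁ D₂ K a b) (hx : x ∈ K) (hy : y ∈ K) :
    {z ∈ K | kle D₁ D₂ a b x z ∧ kle D₁ D₂ a b z y} =
      {z ∈ K | ¬ CutLt D₁ D₂ a b z x ∧ ¬ CutLt D₁ D₂ a b y z} :=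
  Set.ext fun _ => and_congr_right fun hz => and_congr (h.kle_iff hz hx) (h.kle_iff hy hz)

theorem exists_kle_right (h : UprightDecomp D₁ D₂ K a b) (hx : x ∈ K) (hxb : x ≠ b) {ε : ℝ}
    (hε : 0 < ε) : ∃ y ∈ K, kle D₁ D₂ a b x y ∧ x ≠ y ∧
      diam {z ∈ K | kle D₁ D₂ a b x z ∧ kle D₁ D₂ a b z y} < ε := by
  obtain ⟨y, hy, hxy, hdiam⟩ := h.exists_cutLt_right hx hxb hε
  exact ⟨y, hy, (h.kle_iff hy hx).2 fun hyx => (hxy.trans hyx h hx hy hx).1 rfl, hxy.1,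
    by rwa [h.setOf_kle_kle_eq hx hy]⟩

theorem exists_kle_left (h : UprightDecomp D₁ D₂ K a b) (hx : x ∈ K) (hxa : x ≠ a) {ε : ℝ}
    (hε : 0 < ε) : ∃ y ∈ K, kle D₁ D₂ a b y x ∧ y ≠ x ∧
      diam {z ∈ K | kle D₁ D₂ a b y z ∧ kle D₁ D₂ a b z x} < ε := by
  obtain ⟨y, hy, hyx, hdiam⟩ := h.exists_cutLt_left hx hxa hε
  exact ⟨y, hy, (h.kle_iff hx hy).2 fun hxy => (hyx.trans hxy h hy hx hy).1 rfl, hyx.1,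
    by rwa [h.setOf_kle_kle_eq hy hx]⟩

end UprightDecomp

/-! ### The position of the horizontal sides -/

namespace SqDecomp

variable {D₁ D₂ K : Set (ℝ × ℝ)} {a b : ℝ × ℝ}

lemma horizontalSide_subset (h : SqDecomp D₁ D₂ K a b) {v : ℝ} (hv : v = 0 ∨ v = 1) :
    Icc (0 : ℝ) 1 ×ˢ {v} ⊆ D₁ ∨ Icc (0 : ℝ) 1 ×ˢ {v} ⊆ D₂ := by
  have hv_mem : v ∈ Icc (0 : ℝ) 1 := by rcases hv with rfl | rfl <;> norm_num
  have hv_notMem : v ∉ Ioo (0 : ℝ) 1 := by rcases hv with rfl | rfl <;> norm_num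
  refine h.subset_or_subset (isPreconnected_Icc.prod isPreconnected_singleton)
    (fun z hz => mem_unitSq.2 ⟨hz.1, mem_of_eq_of_mem hz.2 hv_mem⟩)
    (Set.disjoint_left.2 fun z hz hzK => hv_notMem (mem_of_eq_of_mem hz.2.symm ?_))
  rcases h.eq_or_eq_or_mem_interior hzK with rfl | rfl | hzi
  · exact h.ha.2
  · exact h.hb.2
  · rw [interior_unitSq] at hzi
    exact hzi.2

lemma uprightDecomp (h : SqDecomp D₁ D₂ K a b) {x : ℝ × ℝ} {φ : unitInterval → ℝ × ℝ}
    (hφ : IsCrosscut D₁ D₂ x φ) : UprightDecomp D₁ D₂ K a b := by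
  obtain ⟨-, -, h₀, h₁, -, -, hD₁, hD₂⟩ := hφ
  refine { h with bot := fun u hu => ?_, top := fun u hu => ?_ }
  · refine (h.horizontalSide_subset (Or.inl rfl)).elim (fun hsub => hsub ⟨hu, rfl⟩) fun hsub => ?_
    exact absurd (hsub ⟨Ioo_subset_Icc_self h₀.1, h₀.2⟩)
      (Set.disjoint_left.1 h.disj (hD₁ 0 (by norm_num)))
  · refine (h.horizontalSide_subset (Or.inr rfl)).elim (fun hsub => ?_) fun hsub => hsub ⟨hu, rfl⟩
    exact absurd (hD₂ 1 (by norm_num))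
      (Set.disjoint_left.1 h.disj (hsub ⟨Ioo_subset_Icc_self h₁.1, h₁.2⟩))

/-! ### Decompositions without crosscuts -/

lemma exists_kle_right_of_not_isCrosscut (h : SqDecomp D₁ D₂ K a b)
    (hno : ∀ x φ, ¬ IsCrosscut D₁ D₂ x φ) {x : ℝ × ℝ} (hxb : x ≠ b) {ε : ℝ} (hε : 0 < ε) :
    ∃ y ∈ K, kle D₁ D₂ a b x y ∧ x ≠ y ∧
      diam {z ∈ K | kle D₁ D₂ a b x z ∧ kle D₁ D₂ a b z y} < ε := by
  suffices ∃ y ∈ K, kle D₁ D₂ a b x y ∧ x ≠ y ∧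
      {z ∈ K | kle D₁ D₂ a b x z ∧ kle D₁ D₂ a b z y}.Subsingleton by
    obtain ⟨y, hy, hxy, hne, hsub⟩ := this
    exact ⟨y, hy, hxy, hne, by rwa [diam_subsingleton hsub]⟩
  simp only [kle, hno, false_and, exists_false, or_false]
  rcases eq_or_ne x a with rfl | hxa
  · obtain ⟨w, hw, hwx, hwb⟩ := h.exists_mem_ne_ne
    exact ⟨w, hw, Or.inl rfl, hwx.symm, subsingleton_singleton.anti (t := {x}) fun z hz =>
      hz.2.2.resolve_right hwb⟩
  · exact ⟨b, h.b_mem, Or.inr rfl, hxb, subsingleton_singleton.anti (t := {b}) fun z hz =>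
      hz.2.1.resolve_left hxa⟩

lemma exists_kle_left_of_not_isCrosscut (h : SqDecomp D₁ D₂ K a b)
    (hno : ∀ x φ, ¬ IsCrosscut D₁ D₂ x φ) {x : ℝ × ℝ} (hxa : x ≠ a) {ε : ℝ} (hε : 0 < ε) :
    ∃ y ∈ K, kle D₁ D₂ a b y x ∧ y ≠ x ∧
      diam {z ∈ K | kle D₁ D₂ a b y z ∧ kle D₁ D₂ a b z x} < ε := by
  suffices ∃ y ∈ K, kle D₁ D₂ a b y x ∧ y ≠ x ∧
      {z ∈ K | kle D₁ D₂ a b y z ∧ kle D₁ D₂ a b z x}.Subsingleton by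
    obtain ⟨y, hy, hyx, hne, hsub⟩ := this
    exact ⟨y, hy, hyx, hne, by rwa [diam_subsingleton hsub]⟩
  simp only [kle, hno, false_and, exists_false, or_false]
  rcases eq_or_ne x b with rfl | hxb
  · obtain ⟨w, hw, hwa, hwx⟩ := h.exists_mem_ne_ne
    exact ⟨w, hw, Or.inr rfl, hwx, subsingleton_singleton.anti (t := {x}) fun z hz =>
      hz.2.1.resolve_left hwa⟩
  · exact ⟨a, h.a_mem, Or.inl rfl, hxa.symm, subsingleton_singleton.anti (t := {a}) fun z hz =>
      hz.2.2.resolve_right hxb⟩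

end SqDecomp

/-- The crosscut order on `K` has no gaps: arbitrarily close (in the order-interval-diameter
metric `ρ_K`) strictly larger elements exist below `b`, and strictly smaller elements exist
above `a`. -/
theorem no_gaps (D₁ D₂ K : Set (ℝ × ℝ)) (a b : ℝ × ℝ)
    (hdec : SqDecomp D₁ D₂ K a b) :
    (∀ z₀ ∈ K, z₀ ≠ b → ∀ ε > (0 : ℝ), ∃ z₁ ∈ K, kle D₁ D₂ a b z₀ z₁ ∧ z₀ ≠ z₁ ∧
      Metric.diam {z ∈ K | kle D₁ D₂ a b z₀ z ∧ kle D₁ D₂ a b z z₁} < ε) ∧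
    (∀ z₀ ∈ K, z₀ ≠ a → ∀ ε > (0 : ℝ), ∃ z₂ ∈ K, kle D₁ D₂ a b z₂ z₀ ∧ z₂ ≠ z₀ ∧
      Metric.diam {z ∈ K | kle D₁ D₂ a b z₂ z ∧ kle D₁ D₂ a b z z₀} < ε) := by
  by_cases hcross : ∃ x φ, IsCrosscut D₁ D₂ x φ
  · obtain ⟨x, φ, hφ⟩ := hcross
    have hup := hdec.uprightDecomp hφ
    exact ⟨fun z₀ hz₀ hz₀b ε hε => hup.exists_kle_right hz₀ hz₀b hε,
      fun z₀ hz₀ hz₀a ε hε => hup.exists_kle_left hz₀ hz₀a hε⟩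
  -- Without crosscuts `kle y x` only says `y = a ∨ x = b`.
  · push Not at hcross
    exact ⟨fun z₀ _ hz₀b ε hε => hdec.exists_kle_right_of_not_isCrosscut hcross hz₀b hε,
      fun z₀ _ hz₀a ε hε => hdec.exists_kle_left_of_not_isCrosscut hcross hz₀a hε⟩
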